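/- arXiv:2103.00240 — 2 statements merged into one kernel-verified Lean document; each statement's English description precedes it below -/
import Mathlib

section
/- Let l > 0, γ > 0, p = 3/2, and let u₀ > 0 be a smooth function on [-l,l] satisfying the compatibility condition and ∂ₓₓ log u₀ > 0 on [-l,l]. If u is a global positive classical solution of the 1D logarithmic diffusion problem with initial data u₀ on [-l,l] × [0,∞), then u_min(t) ∼ t: there exist constants c, C > 0 (depending on u₀, γ, l) such that c·t ≤ u_min(t) ≤ C·t for all t ≥ 1. -/
/-!
Write `P[u] = ∂ₜu - ∂ₓₓ log u`. At a point where `u` touches `v` from above for the first time,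
`P[u] ≤ P[v]`, and the outward derivative of `u` is at most that of `v` if the point lies on the
lateral boundary. So a strict subsolution of the Robin problem starting below `u` never meets `u`,
and a strict supersolution which is infinite at `x = ±l` starting above `u` never does either,
whatever the boundary condition on `u`. Two explicit separable barriers, both linear in time, give
the two bounds.

*Below*: `w = (m + s t) exp (β (x² - l²) / 2)`, where `m < min u₀`. Here `∂ₓₓ log w = β` while
`∂ₜw ≤ s`, so `s < β` makes the interior inequality strict. At `x = ±l` the outward logarithmic
derivative is `β l`, and `w ≥ m` there, so for `p ≥ 1` any `β l < 2 γ m ^ (p - 1)` is admissible.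

*Above*: `w = (a + s t) / (l² - x²)²`. Since `∂ₓₓ log w = (4 l² + 4 x²) / (l² - x²)²`, any
`s > 8 l²` makes `w` a strict supersolution; its value at `x = 0` bounds the minimum of `u`.
-/

/- STATEMENT 1: p = 3/2, γ > 0, log-convex initial data: any global positive classical
solution satisfies u_min(t) ∼ t, i.e. c·t ≤ u_min(t) ≤ C·t for t ≥ 1. -/

open Set Real

/-- `u` is a positive classical solution on `[-l,l] × [0,T)` of
`∂ₜu = ∂ₓₓ log u` with boundary conditions `∂ₓu(±l,t) = ±2γ u(±l,t)^p` and initial data `u₀`. -/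
def IsLogDiffSol (l γ p T : ℝ) (u₀ : ℝ → ℝ) (u : ℝ → ℝ → ℝ) : Prop :=
  ContDiffOn ℝ 2 (fun q : ℝ × ℝ => u q.1 q.2) (Icc (-l) l ×ˢ Ico 0 T) ∧
  (∀ x ∈ Icc (-l) l, ∀ t ∈ Ico (0:ℝ) T, 0 < u x t) ∧
  (∀ x ∈ Icc (-l) l, ∀ t ∈ Ioo (0:ℝ) T,
    deriv (u x) t = deriv (deriv (fun y => Real.log (u y t))) x) ∧
  (∀ t ∈ Ioo (0:ℝ) T, deriv (fun y => u y t) l = 2 * γ * u l t ^ p) ∧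
  (∀ t ∈ Ioo (0:ℝ) T, deriv (fun y => u y t) (-l) = -(2 * γ * u (-l) t ^ p)) ∧
  (∀ x ∈ Icc (-l) l, u x 0 = u₀ x)

/-- `u` is a global (`T = ∞`) positive classical solution on `[-l,l] × [0,∞)`. -/
def IsLogDiffSolGlobal (l γ p : ℝ) (u₀ : ℝ → ℝ) (u : ℝ → ℝ → ℝ) : Prop :=
  ContDiffOn ℝ 2 (fun q : ℝ × ℝ => u q.1 q.2) (Icc (-l) l ×ˢ Ici 0) ∧
  (∀ x ∈ Icc (-l) l, ∀ t ∈ Ici (0:ℝ), 0 < u x t) ∧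
  (∀ x ∈ Icc (-l) l, ∀ t ∈ Ioi (0:ℝ),
    deriv (u x) t = deriv (deriv (fun y => Real.log (u y t))) x) ∧
  (∀ t ∈ Ioi (0:ℝ), deriv (fun y => u y t) l = 2 * γ * u l t ^ p) ∧
  (∀ t ∈ Ioi (0:ℝ), deriv (fun y => u y t) (-l) = -(2 * γ * u (-l) t ^ p)) ∧
  (∀ x ∈ Icc (-l) l, u x 0 = u₀ x)

/-- The compatibility condition `∂ₓ log u₀(±l) = ±2γ u₀(±l)^{p-1}`. -/
def CompatCond (l γ p : ℝ) (u₀ : ℝ → ℝ) : Prop :=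
  deriv (fun x => Real.log (u₀ x)) l = 2 * γ * u₀ l ^ (p - 1) ∧
  deriv (fun x => Real.log (u₀ x)) (-l) = -(2 * γ * u₀ (-l) ^ (p - 1))

/-- `u_min(t) = min_{x ∈ [-l,l]} u(x,t)`. -/
noncomputable def uMin (l : ℝ) (u : ℝ → ℝ → ℝ) (t : ℝ) : ℝ :=
  sInf ((fun x => u x t) '' Icc (-l) l)

/-- `u_max(t) = max_{x ∈ [-l,l]} u(x,t)`. -/
noncomputable def uMax (l : ℝ) (u : ℝ → ℝ → ℝ) (t : ℝ) : ℝ :=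
  sSup ((fun x => u x t) '' Icc (-l) l)

section Touching

open Filter Topology

lemma deriv_le_deriv_of_eventually_le_left {f g : ℝ → ℝ} {x : ℝ} (hf : DifferentiableAt ℝ f x)
    (hg : DifferentiableAt ℝ g x) (hle : f ≤ᶠ[𝓝[<] x] g) (hx : f x = g x) :
    deriv g x ≤ deriv f x := by
  refine le_of_tendsto_of_tendsto (hasDerivAt_iff_tendsto_slope_left_right.1 hg.hasDerivAt).1
    (hasDerivAt_iff_tendsto_slope_left_right.1 hf.hasDerivAt).1 ?_
  filter_upwards [hle, self_mem_nhdsWithin] with y hy (hyx : y < x)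
  simp only [slope_def_field, hx]
  exact div_le_div_of_nonpos_of_le (sub_nonpos.2 hyx.le) (sub_le_sub_right hy _)

lemma deriv_le_deriv_of_eventually_le_right {f g : ℝ → ℝ} {x : ℝ} (hf : DifferentiableAt ℝ f x)
    (hg : DifferentiableAt ℝ g x) (hle : f ≤ᶠ[𝓝[>] x] g) (hx : f x = g x) :
    deriv f x ≤ deriv g x := by
  refine le_of_tendsto_of_tendsto (hasDerivAt_iff_tendsto_slope_left_right.1 hf.hasDerivAt).2
    (hasDerivAt_iff_tendsto_slope_left_right.1 hg.hasDerivAt).2 ?_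
  filter_upwards [hle, self_mem_nhdsWithin] with y hy (hxy : x < y)
  simp only [slope_def_field, hx]
  exact div_le_div_of_nonneg_right (sub_le_sub_right hy _) (sub_nonneg.2 hxy.le)

lemma deriv_deriv_nonneg_of_isLocalMin {f : ℝ → ℝ} {x : ℝ} (hf : ContinuousAt f x)
    (hmin : IsLocalMin f x) : 0 ≤ deriv (deriv f) x := by
  by_contra! hneg
  have hmax : IsLocalMax f x := isLocalMax_of_deriv_deriv_neg hneg hmin.deriv_eq_zero hf
  have hconst : f =ᶠ[𝓝 x] fun _ => f x := by
    filter_upwards [hmin, hmax] with y h₁ h₂ using le_antisymm h₂ h₁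
  have hzero : deriv (deriv f) x = 0 := by
    rw [hconst.deriv.deriv_eq]
    simp only [deriv_const', deriv_const]
  exact hneg.ne hzero

lemma deriv_deriv_le_of_eventually_le {f g : ℝ → ℝ} {x : ℝ} (hf : ContDiffAt ℝ 2 f x)
    (hg : ContDiffAt ℝ 2 g x) (hle : f ≤ᶠ[𝓝 x] g) (hx : f x = g x) :
    deriv (deriv f) x ≤ deriv (deriv g) x := by
  have hmin : IsLocalMin (g - f) x := by
    filter_upwards [hle] with y hy
    simpa only [Pi.sub_apply, hx, sub_self, sub_nonneg] using hy
  have hderiv : deriv (g - f) =ᶠ[𝓝 x] deriv g - deriv f := by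
    filter_upwards [hf.eventually (by simp), hg.eventually (by simp)] with y hfy hgy
    exact deriv_sub (hgy.differentiableAt two_ne_zero) (hfy.differentiableAt two_ne_zero)
  have hdiff : ∀ {h : ℝ → ℝ}, ContDiffAt ℝ 2 h x → DifferentiableAt ℝ (deriv h) x := fun hh =>
    (hh.derivWithin (m := 1) (by norm_num)).differentiableAt one_ne_zero
  have hnonneg := deriv_deriv_nonneg_of_isLocalMin (hg.continuousAt.sub hf.continuousAt) hmin
  rwa [hderiv.deriv_eq, deriv_sub (hdiff hg) (hdiff hf), sub_nonneg] at hnonneg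

lemma exists_first_touch {X : Type*} [TopologicalSpace X] [T2Space X] {K : Set X}
    (hK : IsCompact K) {v u : X → ℝ → ℝ}
    (hv : ContinuousOn (fun q : X × ℝ => v q.1 q.2) (K ×ˢ Ici 0))
    (hu : ContinuousOn (fun q : X × ℝ => u q.1 q.2) (K ×ˢ Ici 0))
    (hinit : ∀ x ∈ K, v x 0 < u x 0) (hmeet : ∃ x ∈ K, ∃ t ≥ 0, u x t ≤ v x t) :
    ∃ x ∈ K, ∃ t > 0, v x t = u x t ∧ ∀ y ∈ K, ∀ s ∈ Icc 0 t, v y s ≤ u y s := by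
  obtain ⟨x₁, hx₁, t₁, ht₁, hle₁⟩ := hmeet
  have hsub : K ×ˢ Icc 0 t₁ ⊆ K ×ˢ Ici 0 := prod_mono_right Icc_subset_Ici_self
  have hcompact : IsCompact (K ×ˢ Icc 0 t₁) := hK.prod isCompact_Icc
  have hclosed : IsClosed {q ∈ K ×ˢ Icc 0 t₁ | u q.1 q.2 ≤ v q.1 q.2} :=
    hcompact.isClosed.isClosed_le (hu.mono hsub) (hv.mono hsub)
  obtain ⟨⟨x, t⟩, ⟨⟨hx, ht⟩, hle⟩, hfirst⟩ :=
    (hcompact.of_isClosed_subset hclosed (sep_subset _ _)).exists_isMinOn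
      ⟨(x₁, t₁), ⟨hx₁, ht₁, le_rfl⟩, hle₁⟩ continuousOn_snd
  have hbefore : ∀ y ∈ K, ∀ s ∈ Ico 0 t, v y s < u y s := fun y hy s hs => by
    by_contra! hys
    exact hs.2.not_ge (isMinOn_iff.1 hfirst (y, s) ⟨⟨hy, hs.1, hs.2.le.trans ht.2⟩, hys⟩)
  have ht_pos : 0 < t := ht.1.lt_of_ne (by rintro rfl; exact (hinit x hx).not_ge hle)
  have hupto : ∀ y ∈ K, ∀ s ∈ Icc 0 t, v y s ≤ u y s := by
    intro y hy s hs
    have hslice : ∀ {w : X → ℝ → ℝ}, ContinuousOn (fun q : X × ℝ => w q.1 q.2) (K ×ˢ Ici 0) →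
        ContinuousOn (w y) (closure (Ico 0 t)) := fun hw => by
      rw [closure_Ico ht_pos.ne]
      exact hw.comp (f := fun r => (y, r)) (by fun_prop) fun r hr => ⟨hy, hr.1⟩
    exact le_on_closure (fun r hr => (hbefore y hy r hr).le) (hslice hv) (hslice hu)
      (by rwa [closure_Ico ht_pos.ne])
  exact ⟨x, hx, t, ht_pos, (hupto x hx t ⟨ht.1, le_rfl⟩).antisymm hle, hupto⟩

/-- The defect `∂ₜu - ∂ₓₓ log u` of `u` in the logarithmic diffusion equation: zero for solutions,
negative for strict subsolutions and positive for strict supersolutions. -/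
noncomputable def logDiffResidual (u : ℝ → ℝ → ℝ) (x t : ℝ) : ℝ :=
  deriv (u x) t - deriv (deriv fun y => log (u y t)) x

lemma logDiffResidual_le_of_touch {u v : ℝ → ℝ → ℝ} {x t : ℝ}
    (hux : ContDiffAt ℝ 2 (fun y => u y t) x) (hvx : ContDiffAt ℝ 2 (fun y => v y t) x)
    (hut : DifferentiableAt ℝ (u x) t) (hvt : DifferentiableAt ℝ (v x) t)
    (hpos : 0 < v x t) (heq : v x t = u x t)
    (hspace : ∀ᶠ y in 𝓝 x, v y t ≤ u y t) (htime : ∀ᶠ s in 𝓝[<] t, v x s ≤ u x s) :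
    logDiffResidual u x t ≤ logDiffResidual v x t := by
  have hlog : ∀ᶠ y in 𝓝 x, log (v y t) ≤ log (u y t) := by
    filter_upwards [hspace, hvx.continuousAt.eventually_const_lt hpos] with y hle hy
    exact log_le_log hy hle
  have hxx := deriv_deriv_le_of_eventually_le (hvx.log hpos.ne') (hux.log (heq ▸ hpos.ne')) hlog
    (congrArg log heq)
  exact sub_le_sub (deriv_le_deriv_of_eventually_le_left hvt hut htime heq) hxx

lemma logDiffResidual_mul {A φ : ℝ → ℝ} {x t : ℝ} (hA : A t ≠ 0) (hφ : ContinuousAt φ x)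
    (hφx : φ x ≠ 0) :
    logDiffResidual (fun y s => A s * φ y) x t =
      deriv A t * φ x - deriv (deriv fun y => log (φ y)) x := by
  have hlog : (fun y => log (A t * φ y)) =ᶠ[𝓝 x] fun y => log (A t) + log (φ y) := by
    filter_upwards [hφ.eventually_ne hφx] with y hy using log_mul hA hy
  have hderiv : (deriv fun y => log (A t) + log (φ y)) = deriv fun y => log (φ y) :=
    deriv_const_add' _
  rw [logDiffResidual, hlog.deriv.deriv_eq, hderiv, deriv_mul_const_field]

end Touching

section Solutions

/-- A positive classical solution of `∂ₜu = ∂ₓₓ log u` on `(-l,l) × (0,∞)`, of class `C²` up to the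
parabolic boundary. No lateral boundary condition is imposed. -/
structure IsInteriorLogDiffSol (l : ℝ) (u : ℝ → ℝ → ℝ) : Prop where
  contDiffOn : ContDiffOn ℝ 2 (fun q : ℝ × ℝ => u q.1 q.2) (Icc (-l) l ×ˢ Ici 0)
  pos : ∀ x ∈ Icc (-l) l, ∀ t ≥ 0, 0 < u x t
  residual_eq_zero : ∀ x ∈ Ioo (-l) l, ∀ t > 0, logDiffResidual u x t = 0

variable {l γ p : ℝ} {u₀ : ℝ → ℝ} {u w : ℝ → ℝ → ℝ}

namespace IsInteriorLogDiffSol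

lemma contDiffAt_space (hu : IsInteriorLogDiffSol l u) {x t : ℝ} (hx : x ∈ Ioo (-l) l)
    (ht : 0 ≤ t) : ContDiffAt ℝ 2 (fun y => u y t) x :=
  (hu.contDiffOn.comp (f := fun y : ℝ => (y, t)) (by fun_prop) fun _ hy => ⟨hy, ht⟩).contDiffAt
    (Icc_mem_nhds hx.1 hx.2)

lemma differentiableAt_time (hu : IsInteriorLogDiffSol l u) {x t : ℝ} (hx : x ∈ Icc (-l) l)
    (ht : 0 < t) : DifferentiableAt ℝ (u x) t :=
  ((hu.contDiffOn.comp (f := fun s : ℝ => (x, s)) (by fun_prop) fun _ hs => ⟨hx, hs⟩).contDiffAt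
    (Ici_mem_nhds ht)).differentiableAt two_ne_zero

lemma continuousOn_initial (hu : IsInteriorLogDiffSol l u) :
    ContinuousOn (fun x => u x 0) (Icc (-l) l) :=
  hu.contDiffOn.continuousOn.comp (f := fun x : ℝ => (x, (0 : ℝ))) (by fun_prop)
    fun _ hx => ⟨hx, self_mem_Ici⟩

lemma uMin_le (hu : IsInteriorLogDiffSol l u) {x t : ℝ} (hx : x ∈ Icc (-l) l) (ht : 0 ≤ t) :
    uMin l u t ≤ u x t :=
  csInf_le ⟨0, forall_mem_image.2 fun y hy => (hu.pos y hy t ht).le⟩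
    (mem_image_of_mem (fun y => u y t) hx)

end IsInteriorLogDiffSol

lemma le_uMin (hl : 0 ≤ l) {b t : ℝ} (h : ∀ x ∈ Icc (-l) l, b ≤ u x t) : b ≤ uMin l u t :=
  le_csInf ((nonempty_Icc.2 (neg_le_self hl)).image _) (forall_mem_image.2 h)

namespace IsLogDiffSolGlobal

lemma isInteriorLogDiffSol (hu : IsLogDiffSolGlobal l γ p u₀ u) : IsInteriorLogDiffSol l u where
  contDiffOn := hu.1
  pos := hu.2.1
  residual_eq_zero x hx t ht := sub_eq_zero.2 (hu.2.2.1 x (Ioo_subset_Icc_self hx) t ht)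

lemma deriv_right (hu : IsLogDiffSolGlobal l γ p u₀ u) {t : ℝ} (ht : 0 < t) :
    deriv (fun y => u y t) l = 2 * γ * u l t ^ p :=
  hu.2.2.2.1 t ht

lemma deriv_left (hu : IsLogDiffSolGlobal l γ p u₀ u) {t : ℝ} (ht : 0 < t) :
    deriv (fun y => u y t) (-l) = -(2 * γ * u (-l) t ^ p) :=
  hu.2.2.2.2.1 t ht

end IsLogDiffSolGlobal

/-- A strict subsolution on `[-l,l] × (0,∞)` of the logarithmic diffusion equation with the
boundary conditions `∂ₓu(±l,t) = ±2γ u(±l,t)^p`. Positivity is not part of the notion. -/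
structure IsStrictSubsolution (l γ p : ℝ) (w : ℝ → ℝ → ℝ) : Prop where
  contDiff : ContDiff ℝ 2 fun q : ℝ × ℝ => w q.1 q.2
  residual_neg : ∀ x ∈ Ioo (-l) l, ∀ t > 0, logDiffResidual w x t < 0
  deriv_right_lt : ∀ t > 0, deriv (fun y => w y t) l < 2 * γ * w l t ^ p
  lt_deriv_left : ∀ t > 0, -(2 * γ * w (-l) t ^ p) < deriv (fun y => w y t) (-l)

namespace IsStrictSubsolution

lemma contDiff_space (hw : IsStrictSubsolution l γ p w) (t : ℝ) :
    ContDiff ℝ 2 fun y => w y t :=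
  hw.contDiff.comp (f := fun y : ℝ => (y, t)) (by fun_prop)

lemma contDiff_time (hw : IsStrictSubsolution l γ p w) (x : ℝ) : ContDiff ℝ 2 (w x) :=
  hw.contDiff.comp (f := fun s : ℝ => (x, s)) (by fun_prop)

variable (hw : IsStrictSubsolution l γ p w) (hu : IsLogDiffSolGlobal l γ p u₀ u)
include hw hu

lemma ne_right_of_touch (hl : 0 < l) (hγ : γ ≠ 0) {t : ℝ} (ht : 0 < t)
    (hle : ∀ y ∈ Icc (-l) l, w y t ≤ u y t) : w l t ≠ u l t := by
  intro heq
  have hpos := hu.isInteriorLogDiffSol.pos l ⟨neg_le_self hl.le, le_rfl⟩ t ht.le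
  -- `deriv` vanishes where `u` is not differentiable, which the Robin condition excludes.
  have hdiff : DifferentiableAt ℝ (fun y => u y t) l :=
    differentiableAt_of_deriv_ne_zero (by rw [hu.deriv_right ht]; positivity)
  have hderiv := deriv_le_deriv_of_eventually_le_left
    ((hw.contDiff_space t).differentiable two_ne_zero l) hdiff
    (by filter_upwards [Icc_mem_nhdsLT (neg_lt_self hl)] with y hy using hle y hy) heq
  rw [hu.deriv_right ht, ← heq] at hderiv
  exact hderiv.not_gt (hw.deriv_right_lt t ht)

lemma ne_left_of_touch (hl : 0 < l) (hγ : γ ≠ 0) {t : ℝ} (ht : 0 < t)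
    (hle : ∀ y ∈ Icc (-l) l, w y t ≤ u y t) : w (-l) t ≠ u (-l) t := by
  intro heq
  have hpos := hu.isInteriorLogDiffSol.pos (-l) ⟨le_rfl, neg_le_self hl.le⟩ t ht.le
  have hdiff : DifferentiableAt ℝ (fun y => u y t) (-l) :=
    differentiableAt_of_deriv_ne_zero (by
      rw [hu.deriv_left ht]
      exact neg_ne_zero.2 (by positivity))
  have hderiv := deriv_le_deriv_of_eventually_le_right
    ((hw.contDiff_space t).differentiable two_ne_zero (-l)) hdiff
    (by filter_upwards [Icc_mem_nhdsGT (neg_lt_self hl)] with y hy using hle y hy) heq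
  rw [hu.deriv_left ht, ← heq] at hderiv
  exact hderiv.not_gt (hw.lt_deriv_left t ht)

theorem lt_of_initial_lt (hl : 0 < l) (hγ : γ ≠ 0)
    (hinit : ∀ x ∈ Icc (-l) l, w x 0 < u x 0) :
    ∀ x ∈ Icc (-l) l, ∀ t ≥ 0, w x t < u x t := by
  by_contra! hmeet
  have hsol := hu.isInteriorLogDiffSol
  obtain ⟨x, hx, t, ht, heq, hle⟩ := exists_first_touch isCompact_Icc
    hw.contDiff.continuous.continuousOn hsol.contDiffOn.continuousOn hinit hmeet
  have hle_t : ∀ y ∈ Icc (-l) l, w y t ≤ u y t := fun y hy => hle y hy t ⟨ht.le, le_rfl⟩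
  have hx_lt : x < l :=
    hx.2.lt_of_ne (by rintro rfl; exact hw.ne_right_of_touch hu hl hγ ht hle_t heq)
  have hlt_x : -l < x :=
    hx.1.lt_of_ne (by rintro rfl; exact hw.ne_left_of_touch hu hl hγ ht hle_t heq)
  have hresidual : logDiffResidual u x t ≤ logDiffResidual w x t :=
    logDiffResidual_le_of_touch (hsol.contDiffAt_space ⟨hlt_x, hx_lt⟩ ht.le)
      (hw.contDiff_space t).contDiffAt (hsol.differentiableAt_time hx ht)
      ((hw.contDiff_time x).differentiable two_ne_zero t) (heq ▸ hsol.pos x hx t ht.le) heq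
      (by filter_upwards [Icc_mem_nhds hlt_x hx_lt] with y hy using hle_t y hy)
      (by filter_upwards [Icc_mem_nhdsLT ht] with s hs using hle x hx s hs)
  rw [hsol.residual_eq_zero x ⟨hlt_x, hx_lt⟩ t ht] at hresidual
  exact hresidual.not_gt (hw.residual_neg x ⟨hlt_x, hx_lt⟩ t ht)

end IsStrictSubsolution

end Solutions

section LowerBound

variable {l γ p β m s : ℝ} {u₀ : ℝ → ℝ} {u : ℝ → ℝ → ℝ}

/-- The barrier `(m + s t) exp (β (x² - l²) / 2)` for the lower bound, normalized to have the value
`m + s t` at `x = ±l`. -/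
noncomputable def lowerBarrier (l β m s x t : ℝ) : ℝ :=
  (m + s * t) * exp (β * (x ^ 2 - l ^ 2) / 2)

lemma hasDerivAt_half_mul_sq_sub (β l x : ℝ) :
    HasDerivAt (fun y => β * (y ^ 2 - l ^ 2) / 2) (β * x) x := by
  refine ((((hasDerivAt_pow 2 x).sub_const _).const_mul β).div_const 2).congr_deriv ?_
  simp only [Nat.cast_ofNat, Nat.add_one_sub_one, pow_one]
  ring

lemma exp_half_mul_sq_sub_le_one (hβ : 0 ≤ β) {x : ℝ} (hx : x ∈ Icc (-l) l) :
    exp (β * (x ^ 2 - l ^ 2) / 2) ≤ 1 := by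
  have hx2 : x ^ 2 - l ^ 2 ≤ 0 := sub_nonpos.2 (sq_le_sq' hx.1 hx.2)
  exact exp_le_one_iff.2 (div_nonpos_of_nonpos_of_nonneg
    (mul_nonpos_of_nonneg_of_nonpos hβ hx2) zero_le_two)

lemma deriv_lowerBarrier (l β m s x t : ℝ) :
    deriv (fun y => lowerBarrier l β m s y t) x = β * x * lowerBarrier l β m s x t := by
  simp only [lowerBarrier]
  rw [((hasDerivAt_half_mul_sq_sub β l x).exp.const_mul (m + s * t)).deriv]
  ring

lemma mul_exp_mul_le_lowerBarrier (hβ : 0 ≤ β) (hm : 0 ≤ m) (hs : 0 ≤ s) (x : ℝ) {t : ℝ}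
    (ht : 0 ≤ t) : s * exp (-(β * l ^ 2 / 2)) * t ≤ lowerBarrier l β m s x t := by
  have hexp : exp (-(β * l ^ 2 / 2)) ≤ exp (β * (x ^ 2 - l ^ 2) / 2) :=
    exp_le_exp.2 (by linarith [mul_nonneg hβ (sq_nonneg x)])
  calc s * exp (-(β * l ^ 2 / 2)) * t = s * t * exp (-(β * l ^ 2 / 2)) := by ring
    _ ≤ (m + s * t) * exp (β * (x ^ 2 - l ^ 2) / 2) :=
      mul_le_mul (le_add_of_nonneg_left hm) hexp (exp_pos _).le (by positivity)

lemma logDiffResidual_lowerBarrier {t : ℝ} (x : ℝ) (ht : m + s * t ≠ 0) :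
    logDiffResidual (lowerBarrier l β m s) x t = s * exp (β * (x ^ 2 - l ^ 2) / 2) - β := by
  have hlog : (deriv fun y => log (exp (β * (y ^ 2 - l ^ 2) / 2))) = fun y => β * y := by
    simp only [log_exp]
    exact funext fun y => (hasDerivAt_half_mul_sq_sub β l y).deriv
  have htime : deriv (fun r => m + s * r) t = s := by simp
  have hres := logDiffResidual_mul (A := fun r => m + s * r)
    (φ := fun y => exp (β * (y ^ 2 - l ^ 2) / 2)) (x := x) ht (by fun_prop) (exp_pos _).ne'
  rw [hlog, htime, deriv_const_mul_id'] at hres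
  exact hres

lemma isStrictSubsolution_lowerBarrier (hm : 0 < m) (hs : 0 ≤ s) (hsβ : s < β)
    (hflux : ∀ v ≥ m, β * l * v < 2 * γ * v ^ p) :
    IsStrictSubsolution l γ p (lowerBarrier l β m s) where
  contDiff := by unfold lowerBarrier; fun_prop
  residual_neg x hx t ht := by
    have hexp := exp_half_mul_sq_sub_le_one (hs.trans hsβ.le) (Ioo_subset_Icc_self hx)
    rw [logDiffResidual_lowerBarrier x (by positivity)]
    linarith [mul_le_of_le_one_right hs hexp]
  deriv_right_lt t ht := by
    have hv : lowerBarrier l β m s l t = m + s * t := by simp [lowerBarrier]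
    rw [deriv_lowerBarrier, hv]
    exact hflux _ (by nlinarith)
  lt_deriv_left t ht := by
    have hv : lowerBarrier l β m s (-l) t = m + s * t := by simp [lowerBarrier]
    rw [deriv_lowerBarrier, hv]
    linarith [hflux (m + s * t) (by nlinarith)]

lemma flux_lt_of_one_le (hγ : 0 < γ) (hp : 1 ≤ p) (hm : 0 < m) {v : ℝ} (hv : m ≤ v) :
    γ * m ^ (p - 1) * v < 2 * γ * v ^ p := by
  have hv_pos : 0 < v := hm.trans_le hv
  calc γ * m ^ (p - 1) * v ≤ γ * v ^ (p - 1) * v := by gcongr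
    _ = γ * v ^ p := by rw [mul_assoc, ← rpow_add_one hv_pos.ne', sub_add_cancel]
    _ < 2 * γ * v ^ p := by
      have : 0 < γ * v ^ p := by positivity
      linarith

lemma IsInteriorLogDiffSol.exists_pos_lt_initial (hu : IsInteriorLogDiffSol l u) (hl : 0 ≤ l) :
    ∃ m > 0, ∀ x ∈ Icc (-l) l, m < u x 0 := by
  obtain ⟨x, hx, hmin⟩ := isCompact_Icc.exists_isMinOn (nonempty_Icc.2 (neg_le_self hl))
    hu.continuousOn_initial
  have hpos := hu.pos x hx 0 le_rfl
  exact ⟨u x 0 / 2, half_pos hpos, fun y hy => (half_lt_self hpos).trans_le (hmin hy)⟩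

theorem IsLogDiffSolGlobal.exists_mul_le (hl : 0 < l) (hγ : 0 < γ) (hp : 1 ≤ p)
    (hu : IsLogDiffSolGlobal l γ p u₀ u) :
    ∃ c > 0, ∀ x ∈ Icc (-l) l, ∀ t ≥ 0, c * t ≤ u x t := by
  obtain ⟨m, hm, hmu⟩ := hu.isInteriorLogDiffSol.exists_pos_lt_initial hl.le
  obtain ⟨β, hβ, hβl⟩ : ∃ β > 0, β * l = γ * m ^ (p - 1) :=
    ⟨γ * m ^ (p - 1) / l, by positivity, by field_simp⟩
  have hsub : IsStrictSubsolution l γ p (lowerBarrier l β m (β / 2)) :=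
    isStrictSubsolution_lowerBarrier hm (by positivity) (half_lt_self hβ) fun v hv => by
      rw [hβl]
      exact flux_lt_of_one_le hγ hp hm hv
  have hinit : ∀ x ∈ Icc (-l) l, lowerBarrier l β m (β / 2) x 0 < u x 0 := fun x hx => by
    rw [lowerBarrier, mul_zero, add_zero]
    exact (mul_le_of_le_one_right hm.le (exp_half_mul_sq_sub_le_one hβ.le hx)).trans_lt (hmu x hx)
  exact ⟨β / 2 * exp (-(β * l ^ 2 / 2)), by positivity, fun x hx t ht =>
    (mul_exp_mul_le_lowerBarrier hβ.le hm.le (by positivity) x ht).trans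
      (hsub.lt_of_initial_lt hu hl hγ.ne' hinit x hx t ht).le⟩

end LowerBound

section UpperBound

open Topology

variable {l a s : ℝ} {u : ℝ → ℝ → ℝ}

/-- The barrier `(a + s t) / (l² - x²)²` for the upper bound. It tends to infinity as `x → ±l`,
although its formal value there is `0`. -/
noncomputable def upperBarrier (l a s x t : ℝ) : ℝ :=
  (a + s * t) * ((l ^ 2 - x ^ 2) ^ 2)⁻¹

lemma sq_sub_sq_pos {x : ℝ} (hx : x ∈ Ioo (-l) l) : 0 < l ^ 2 - x ^ 2 :=
  sub_pos.2 (sq_lt_sq' hx.1 hx.2)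

lemma deriv_deriv_log_inv_sq_sub_sq {x : ℝ} (hx : x ∈ Ioo (-l) l) :
    deriv (deriv fun y => log ((l ^ 2 - y ^ 2) ^ 2)⁻¹) x =
      (4 * l ^ 2 + 4 * x ^ 2) * ((l ^ 2 - x ^ 2) ^ 2)⁻¹ := by
  have hq : ∀ y, HasDerivAt (fun y => l ^ 2 - y ^ 2) (-(2 * y)) y := fun y => by
    simpa using (hasDerivAt_pow 2 y).const_sub (l ^ 2)
  have hderiv : (deriv fun y => log ((l ^ 2 - y ^ 2) ^ 2)⁻¹) =ᶠ[𝓝 x]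
      fun y => 4 * y / (l ^ 2 - y ^ 2) := by
    filter_upwards [Ioo_mem_nhds hx.1 hx.2] with y hy
    simp only [log_inv, log_pow]
    rw [(((hq y).log (sq_sub_sq_pos hy).ne').const_mul _).fun_neg.deriv]
    ring
  have hne := (sq_sub_sq_pos hx).ne'
  rw [hderiv.deriv_eq, (((hasDerivAt_id' x).const_mul 4).fun_div (hq x) hne).deriv]
  field_simp
  ring

lemma logDiffResidual_upperBarrier_pos {x t : ℝ} (hs : 8 * l ^ 2 < s) (hx : x ∈ Ioo (-l) l)
    (ht : a + s * t ≠ 0) : 0 < logDiffResidual (upperBarrier l a s) x t := by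
  have hq := sq_sub_sq_pos hx
  have htime : deriv (fun r => a + s * r) t = s := by simp
  have hres := logDiffResidual_mul (A := fun r => a + s * r)
    (φ := fun y => ((l ^ 2 - y ^ 2) ^ 2)⁻¹) (x := x) ht
    (ContinuousAt.inv₀ (by fun_prop) (by positivity)) (by positivity)
  rw [htime, deriv_deriv_log_inv_sq_sub_sq hx, ← sub_mul] at hres
  have hcoef : 0 < s - (4 * l ^ 2 + 4 * x ^ 2) := by linarith
  exact (mul_pos hcoef (by positivity)).trans_eq hres.symm

namespace IsInteriorLogDiffSol

-- The comparison `u < upperBarrier l a s` is stated with the denominator cleared, so that both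
-- sides are continuous up to `x = ±l`.
theorem mul_sq_lt_of_initial_lt (hu : IsInteriorLogDiffSol l u) (hs : 8 * l ^ 2 < s)
    (hinit : ∀ x ∈ Icc (-l) l, u x 0 * (l ^ 2 - x ^ 2) ^ 2 < a) :
    ∀ x ∈ Icc (-l) l, ∀ t ≥ 0, u x t * (l ^ 2 - x ^ 2) ^ 2 < a + s * t := by
  by_contra! hmeet
  obtain ⟨x, hx, t, ht, heq, hle⟩ := exists_first_touch isCompact_Icc
    (v := fun x t => u x t * (l ^ 2 - x ^ 2) ^ 2) (u := fun _ t => a + s * t)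
    (hu.contDiffOn.continuousOn.mul (by fun_prop)) (by fun_prop)
    (by simpa only [mul_zero, add_zero] using hinit) hmeet
  have ha : 0 < a := lt_of_le_of_lt
    (mul_nonneg (hu.pos x hx 0 le_rfl).le (sq_nonneg _)) (hinit x hx)
  have hs_pos : 0 < s := lt_of_le_of_lt (by positivity) hs
  have hA : 0 < a + s * t := by positivity
  have hx_ne : l ^ 2 - x ^ 2 ≠ 0 := fun h => by simp [h, hA.ne] at heq
  have hxI : x ∈ Ioo (-l) l :=
    ⟨hx.1.lt_of_ne (by rintro rfl; simp at hx_ne), hx.2.lt_of_ne (by rintro rfl; simp at hx_ne)⟩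
  have hq := sq_sub_sq_pos hxI
  have hle_barrier : ∀ y ∈ Ioo (-l) l, ∀ r ∈ Icc 0 t, u y r ≤ upperBarrier l a s y r :=
    fun y hy r hr => (le_mul_inv_iff₀ (pow_pos (sq_sub_sq_pos hy) 2)).2
      (hle y (Ioo_subset_Icc_self hy) r hr)
  have hresidual : logDiffResidual (upperBarrier l a s) x t ≤ logDiffResidual u x t :=
    logDiffResidual_le_of_touch
      (contDiffAt_const.mul (ContDiffAt.inv (by fun_prop) (by positivity)))
      (hu.contDiffAt_space hxI ht.le) (by unfold upperBarrier; fun_prop)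
      (hu.differentiableAt_time hx ht) (hu.pos x hx t ht.le)
      ((eq_mul_inv_iff_mul_eq₀ (by positivity)).2 heq)
      (by filter_upwards [Ioo_mem_nhds hxI.1 hxI.2] with y hy
          exact hle_barrier y hy t ⟨ht.le, le_rfl⟩)
      (by filter_upwards [Icc_mem_nhdsLT ht] with r hr using hle_barrier x hxI r hr)
  rw [hu.residual_eq_zero x hxI t ht] at hresidual
  exact hresidual.not_gt (logDiffResidual_upperBarrier_pos hs hxI hA.ne')

theorem exists_apply_zero_le_mul (hu : IsInteriorLogDiffSol l u) (hl : 0 < l) :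
    ∃ C > 0, ∀ t ≥ 1, u 0 t ≤ C * t := by
  obtain ⟨b, hb⟩ := isCompact_Icc.bddAbove_image
    (hu.continuousOn_initial.mul (g := fun x => (l ^ 2 - x ^ 2) ^ 2) (by fun_prop))
  have hinit : ∀ x ∈ Icc (-l) l, u x 0 * (l ^ 2 - x ^ 2) ^ 2 < |b| + 1 := fun x hx =>
    ((hb (mem_image_of_mem _ hx)).trans (le_abs_self b)).trans_lt (lt_add_one _)
  refine ⟨(|b| + 1 + (8 * l ^ 2 + 1)) / l ^ 4, by positivity, fun t ht => ?_⟩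
  have hzero := hu.mul_sq_lt_of_initial_lt (lt_add_one (8 * l ^ 2)) hinit 0
    ⟨neg_nonpos.2 hl.le, hl.le⟩ t (zero_le_one.trans ht)
  rw [div_mul_eq_mul_div, le_div_iff₀ (by positivity)]
  calc u 0 t * l ^ 4 = u 0 t * (l ^ 2 - 0 ^ 2) ^ 2 := by ring
    _ ≤ (|b| + 1) * 1 + (8 * l ^ 2 + 1) * t := by rw [mul_one]; exact hzero.le
    _ ≤ (|b| + 1) * t + (8 * l ^ 2 + 1) * t := by gcongr
    _ = (|b| + 1 + (8 * l ^ 2 + 1)) * t := by ring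

end IsInteriorLogDiffSol

end UpperBound

theorem uMin_grows_linearly_general {l γ p : ℝ} (hl : 0 < l) (hγ : 0 < γ) (hp : 1 ≤ p)
    {u₀ : ℝ → ℝ} {u : ℝ → ℝ → ℝ} (hu : IsLogDiffSolGlobal l γ p u₀ u) :
    ∃ c > (0:ℝ), ∃ C > (0:ℝ), ∀ t ≥ (1:ℝ),
      c * t ≤ uMin l u t ∧ uMin l u t ≤ C * t := by
  have hsol := hu.isInteriorLogDiffSol
  obtain ⟨c, hc, hlower⟩ := hu.exists_mul_le hl hγ hp
  obtain ⟨C, hC, hupper⟩ := hsol.exists_apply_zero_le_mul hl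
  refine ⟨c, hc, C, hC, fun t ht => ?_⟩
  have ht_nonneg : 0 ≤ t := zero_le_one.trans ht
  exact ⟨le_uMin hl.le fun x hx => hlower x hx t ht_nonneg,
    (hsol.uMin_le ⟨neg_nonpos.2 hl.le, hl.le⟩ ht_nonneg).trans (hupper t ht)⟩

theorem uMin_grows_linearly
    (l γ : ℝ) (hl : 0 < l) (hγ : 0 < γ) (u₀ : ℝ → ℝ)
    (hu₀smooth : ContDiffOn ℝ (⊤ : ℕ∞) u₀ (Icc (-l) l))
    (hu₀pos : ∀ x ∈ Icc (-l) l, 0 < u₀ x)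
    (hcompat : CompatCond l γ (3/2) u₀)
    (hconvex : ∀ x ∈ Icc (-l) l, 0 < deriv (deriv (fun y => Real.log (u₀ y))) x)
    (u : ℝ → ℝ → ℝ) (hu : IsLogDiffSolGlobal l γ (3/2) u₀ u) :
    ∃ c > (0:ℝ), ∃ C > (0:ℝ), ∀ t ≥ (1:ℝ),
      c * t ≤ uMin l u t ∧ uMin l u t ≤ C * t :=
  uMin_grows_linearly_general hl hγ (by norm_num) hu
end

section
/- Let l > 0, γ > 0, p = 3/2, and let u₀ > 0 be a smooth function on [-l,l] satisfying the compatibility condition and ∂ₓₓ log u₀ > 0 on [-l,l]. If u is a global positive classical solution of the 1D logarithmic diffusion problem with initial data u₀ on [-l,l] × [0,∞), then there exists c > 0 (depending on u₀, γ, l) such that u_max(t) ≥ c·t^{3/2} for all t ≥ 1, and moreover the blow-up profile is not flat: u_max(t)/u_min(t) → ∞ as t → ∞. -/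
/- STATEMENT 2: p = 3/2, γ > 0, log-convex initial data: any global positive classical
solution satisfies u_max(t) ≥ c·t^{3/2} for t ≥ 1, and u_max(t)/u_min(t) → ∞ as t → ∞. -/

open Set Real

/-!
Put `v = log u`, so that `e^v ∂ₜv = ∂ₓₓv` with `∂ₙv = 2γ e^((p-1)v)` at `x = ±l`. A comparison
principle holds for this problem: the difference of a super- and a subsolution, divided by a
Gaussian weight `e^(αx² + Kt)`, cannot have a negative minimum, because the weight beats the
Lipschitz constant of the boundary flux. If `v(·,0)` is convex it is a stationary
subsolution, hence `v(x,t) ≥ v(x,0)`; comparing `v` with its time translates, `u` increases in time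
and `v(·,t)` stays convex, so that the maximum of `u` sits at an endpoint.

The total mass therefore satisfies `M' ≥ 2γ u_max^(p-1) ≥ c M^(p-1)`, which makes `u_max^(2-p)` grow
at least linearly. The mass of the inner half interval changes only by the difference of `∂ₓv` at
`±l/2`, which by convexity of `v` is of order `log u_max`. Hence `l u_min` is bounded by a constant
plus `C t log u_max = O(u_max^(2-p) log u_max) = o(u_max)` when `1 < p < 2`.
-/

open Filter Topology

/-! ### First- and second-order conditions at a minimum -/

section Minimum

variable {f g : ℝ → ℝ} {f' g' x y : ℝ} {s : Set ℝ}

theorem mul_sub_nonneg_of_isMinOn (hs : Convex ℝ s) (hx : x ∈ s) (hy : y ∈ s)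
    (hf : HasDerivWithinAt f f' s x) (hmin : IsMinOn f s x) : 0 ≤ f' * (y - x) := by
  have h := hmin.localize.hasFDerivWithinAt_nonneg hf.hasFDerivWithinAt
    (sub_mem_posTangentConeAt_of_segment_subset (hs.segment_subset hx hy))
  simpa [mul_comm] using h

theorem nonneg_of_isLocalMin_of_hasDerivAt (hmin : IsLocalMin f x)
    (hf : ∀ᶠ y in 𝓝 x, HasDerivAt f (g y) y) (hg : HasDerivAt g g' x) : 0 ≤ g' := by
  by_contra! hneg
  have hderiv : deriv f =ᶠ[𝓝 x] g := hf.mono fun _ h => h.deriv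
  have hderiv₂ : deriv (deriv f) x = g' := by rw [hderiv.deriv_eq, hg.deriv]
  have hmax : IsLocalMax f x := isLocalMax_of_deriv_deriv_neg (hderiv₂.trans_lt hneg)
    hmin.deriv_eq_zero hf.self_of_nhds.continuousAt
  have hconst : f =ᶠ[𝓝 x] fun _ => f x := by
    filter_upwards [hmin, hmax] with y h₁ h₂ using le_antisymm h₂ h₁
  have hzero : deriv f =ᶠ[𝓝 x] fun _ => 0 := by simpa using hconst.deriv
  have : deriv (deriv f) x = 0 := by simpa using hzero.deriv_eq
  linarith

end Minimum

theorem exists_eq_mul_and_mul_le {X : Type*} [TopologicalSpace X] {K : Set X} {d φ : X → ℝ}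
    (hK : IsCompact K) (hne : K.Nonempty) (hd : ContinuousOn d K) (hφ : ContinuousOn φ K)
    (hpos : ∀ q ∈ K, 0 < φ q) : ∃ q ∈ K, ∃ m, d q = m * φ q ∧ ∀ r ∈ K, m * φ r ≤ d r := by
  obtain ⟨q, hq, hmin⟩ := hK.exists_isMinOn hne (hd.div hφ fun r hr => (hpos r hr).ne')
  exact ⟨q, hq, d q / φ q, (div_mul_cancel₀ _ (hpos q hq).ne').symm,
    fun r hr => (le_div_iff₀ (hpos r hr)).1 (hmin hr)⟩

/-! ### Functions with parabolic derivatives on a half-strip -/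

/-- `vx`, `vxx` and `vt` are the partial derivatives `∂ₓv`, `∂ₓₓv` and `∂ₜv` of a function `v`
continuous on `[-l, l] × [0, ∞)`; on the boundary of the half-strip they are one-sided. Carrying
the derivatives as data is what lets sums and time translates be formed. -/
structure HasParabolicDerivs (l : ℝ) (v vx vxx vt : ℝ → ℝ → ℝ) : Prop where
  continuousOn : ContinuousOn (fun q : ℝ × ℝ => v q.1 q.2) (Icc (-l) l ×ˢ Ici 0)
  hasDerivWithinAt_x : ∀ x ∈ Icc (-l) l, ∀ t ∈ Ici (0 : ℝ),
    HasDerivWithinAt (fun y => v y t) (vx x t) (Icc (-l) l) x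
  hasDerivWithinAt_xx : ∀ x ∈ Icc (-l) l, ∀ t ∈ Ici (0 : ℝ),
    HasDerivWithinAt (fun y => vx y t) (vxx x t) (Icc (-l) l) x
  hasDerivWithinAt_t : ∀ x ∈ Icc (-l) l, ∀ t ∈ Ici (0 : ℝ),
    HasDerivWithinAt (v x) (vt x t) (Ici 0) t

/-- The barrier of the minimum principle: `α` makes its conormal derivative large on the lateral
boundary, `K` its time derivative in the interior. -/
noncomputable def gaussianWeight (α K x t : ℝ) : ℝ :=
  exp (α * x ^ 2 + K * t)

theorem gaussianWeight_pos (α K x t : ℝ) : 0 < gaussianWeight α K x t :=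
  exp_pos _

theorem hasDerivAt_gaussianWeight_x (α K x t : ℝ) :
    HasDerivAt (fun y => gaussianWeight α K y t) (2 * α * x * gaussianWeight α K x t) x := by
  have h := (((hasDerivAt_pow 2 x).const_mul α).add_const (K * t)).exp
  exact h.congr_deriv (by simp only [gaussianWeight]; ring)

theorem hasDerivAt_gaussianWeight_t (α K x t : ℝ) :
    HasDerivAt (gaussianWeight α K x) (K * gaussianWeight α K x t) t := by
  have h := (((hasDerivAt_id t).const_mul K).const_add (α * x ^ 2)).exp
  exact h.congr_deriv (by simp only [gaussianWeight, id]; ring)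

theorem hasParabolicDerivs_gaussianWeight (l α K : ℝ) :
    HasParabolicDerivs l (gaussianWeight α K) (fun x t => 2 * α * x * gaussianWeight α K x t)
      (fun x t => (2 * α + (2 * α * x) ^ 2) * gaussianWeight α K x t)
      (fun x t => K * gaussianWeight α K x t) where
  continuousOn := by unfold gaussianWeight; fun_prop
  hasDerivWithinAt_x x _ t _ := (hasDerivAt_gaussianWeight_x α K x t).hasDerivWithinAt
  hasDerivWithinAt_xx x _ t _ := by
    have h := ((hasDerivAt_id x).const_mul (2 * α)).mul (hasDerivAt_gaussianWeight_x α K x t)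
    exact (h.congr_deriv (by simp only [id]; ring)).hasDerivWithinAt
  hasDerivWithinAt_t x _ t _ := (hasDerivAt_gaussianWeight_t α K x t).hasDerivWithinAt

namespace HasParabolicDerivs

variable {l : ℝ} {v vx vxx vt w wx wxx wt : ℝ → ℝ → ℝ}

theorem sub (hv : HasParabolicDerivs l v vx vxx vt) (hw : HasParabolicDerivs l w wx wxx wt) :
    HasParabolicDerivs l (fun x t => v x t - w x t) (fun x t => vx x t - wx x t)
      (fun x t => vxx x t - wxx x t) (fun x t => vt x t - wt x t) where
  continuousOn := hv.continuousOn.sub hw.continuousOn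
  hasDerivWithinAt_x x hx t ht :=
    (hv.hasDerivWithinAt_x x hx t ht).sub (hw.hasDerivWithinAt_x x hx t ht)
  hasDerivWithinAt_xx x hx t ht :=
    (hv.hasDerivWithinAt_xx x hx t ht).sub (hw.hasDerivWithinAt_xx x hx t ht)
  hasDerivWithinAt_t x hx t ht :=
    (hv.hasDerivWithinAt_t x hx t ht).sub (hw.hasDerivWithinAt_t x hx t ht)

theorem const_mul (c : ℝ) (hv : HasParabolicDerivs l v vx vxx vt) :
    HasParabolicDerivs l (fun x t => c * v x t) (fun x t => c * vx x t) (fun x t => c * vxx x t)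
      (fun x t => c * vt x t) where
  continuousOn := continuousOn_const.mul hv.continuousOn
  hasDerivWithinAt_x x hx t ht := (hv.hasDerivWithinAt_x x hx t ht).const_mul c
  hasDerivWithinAt_xx x hx t ht := (hv.hasDerivWithinAt_xx x hx t ht).const_mul c
  hasDerivWithinAt_t x hx t ht := (hv.hasDerivWithinAt_t x hx t ht).const_mul c

theorem translate {h : ℝ} (hh : 0 ≤ h) (hv : HasParabolicDerivs l v vx vxx vt) :
    HasParabolicDerivs l (fun x t => v x (t + h)) (fun x t => vx x (t + h))
      (fun x t => vxx x (t + h)) (fun x t => vt x (t + h)) where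
  continuousOn := hv.continuousOn.comp (f := fun q : ℝ × ℝ => (q.1, q.2 + h)) (by fun_prop)
    fun _ hq => ⟨hq.1, add_nonneg hq.2 hh⟩
  hasDerivWithinAt_x x hx t ht := hv.hasDerivWithinAt_x x hx (t + h) (add_nonneg ht hh)
  hasDerivWithinAt_xx x hx t ht := hv.hasDerivWithinAt_xx x hx (t + h) (add_nonneg ht hh)
  hasDerivWithinAt_t x hx t ht := by
    have hshift : HasDerivWithinAt (fun τ => τ + h) 1 (Ici 0) t :=
      (hasDerivWithinAt_id t _).add_const h
    simpa [Function.comp_def] using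
      (hv.hasDerivWithinAt_t x hx (t + h) (add_nonneg ht hh)).comp t hshift
        fun τ hτ => add_nonneg hτ hh

theorem initial (hv : HasParabolicDerivs l v vx vxx vt) :
    HasParabolicDerivs l (fun x _ => v x 0) (fun x _ => vx x 0) (fun x _ => vxx x 0)
      (fun _ _ => 0) where
  continuousOn := hv.continuousOn.comp (f := fun q : ℝ × ℝ => (q.1, 0)) (by fun_prop)
    fun _ hq => ⟨hq.1, self_mem_Ici⟩
  hasDerivWithinAt_x x hx _ _ := hv.hasDerivWithinAt_x x hx 0 self_mem_Ici
  hasDerivWithinAt_xx x hx _ _ := hv.hasDerivWithinAt_xx x hx 0 self_mem_Ici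
  hasDerivWithinAt_t _ _ _ _ := hasDerivWithinAt_const ..

/-! ### The minimum principle -/

section Minimum

variable {T x t : ℝ}

theorem x_mul_sub_nonneg_of_isMinOn (hv : HasParabolicDerivs l v vx vxx vt)
    (hmin : IsMinOn (fun q : ℝ × ℝ => v q.1 q.2) (Icc (-l) l ×ˢ Icc 0 T) (x, t))
    (hx : x ∈ Icc (-l) l) (ht : t ∈ Icc 0 T) {y : ℝ} (hy : y ∈ Icc (-l) l) :
    0 ≤ vx x t * (y - x) :=
  mul_sub_nonneg_of_isMinOn (convex_Icc _ _) hx hy (hv.hasDerivWithinAt_x x hx t ht.1)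
    fun z hz => hmin (a := (z, t)) ⟨hz, ht⟩

theorem xx_nonneg_of_isMinOn (hv : HasParabolicDerivs l v vx vxx vt)
    (hmin : IsMinOn (fun q : ℝ × ℝ => v q.1 q.2) (Icc (-l) l ×ˢ Icc 0 T) (x, t))
    (hx : x ∈ Ioo (-l) l) (ht : t ∈ Icc 0 T) : 0 ≤ vxx x t := by
  refine nonneg_of_isLocalMin_of_hasDerivAt (f := fun y => v y t) (g := fun y => vx y t) ?_ ?_
    ((hv.hasDerivWithinAt_xx x (Ioo_subset_Icc_self hx) t ht.1).hasDerivAt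
      (Icc_mem_nhds hx.1 hx.2))
  · filter_upwards [Icc_mem_nhds hx.1 hx.2] with y hy using hmin (a := (y, t)) ⟨hy, ht⟩
  · filter_upwards [Ioo_mem_nhds hx.1 hx.2] with y hy
    exact (hv.hasDerivWithinAt_x y (Ioo_subset_Icc_self hy) t ht.1).hasDerivAt
      (Icc_mem_nhds hy.1 hy.2)

theorem t_nonpos_of_isMinOn (hv : HasParabolicDerivs l v vx vxx vt)
    (hmin : IsMinOn (fun q : ℝ × ℝ => v q.1 q.2) (Icc (-l) l ×ˢ Icc 0 T) (x, t))
    (hx : x ∈ Icc (-l) l) (ht : t ∈ Ioc 0 T) : vt x t ≤ 0 := by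
  have hderiv := (hv.hasDerivWithinAt_t x hx t ht.1.le).mono (Icc_subset_Ici_self : Icc 0 T ⊆ Ici 0)
  have h := mul_sub_nonneg_of_isMinOn (convex_Icc 0 T) ⟨ht.1.le, ht.2⟩
    ⟨le_rfl, ht.1.le.trans ht.2⟩ hderiv fun τ hτ => hmin (a := (x, τ)) ⟨hx, hτ⟩
  nlinarith [ht.1]

end Minimum

theorem exists_contact_gaussianWeight (α K : ℝ) {T : ℝ} (hv : HasParabolicDerivs l v vx vxx vt)
    (hinitial : ∀ x ∈ Icc (-l) l, 0 ≤ v x 0)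
    (hneg : ∃ x ∈ Icc (-l) l, ∃ t ∈ Icc 0 T, v x t < 0) :
    ∃ x ∈ Icc (-l) l, ∃ t ∈ Ioc 0 T, v x t < 0 ∧ vt x t ≤ K * v x t ∧
      (∀ y ∈ Icc (-l) l, 0 ≤ (vx x t - 2 * α * x * v x t) * (y - x)) ∧
      (x ∈ Ioo (-l) l → (2 * α + (2 * α * x) ^ 2) * v x t ≤ vxx x t) := by
  obtain ⟨x₁, hx₁, t₁, ht₁, hneg⟩ := hneg
  have hφ := hasParabolicDerivs_gaussianWeight l α K
  have hstrip : Icc (-l) l ×ˢ Icc 0 T ⊆ Icc (-l) l ×ˢ Ici 0 :=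
    prod_mono_right Icc_subset_Ici_self
  obtain ⟨⟨x, t⟩, ⟨hx, ht⟩, m, heq, hle⟩ :=
    exists_eq_mul_and_mul_le (isCompact_Icc.prod isCompact_Icc) ⟨(x₁, t₁), hx₁, ht₁⟩
      (hv.continuousOn.mono hstrip) (hφ.continuousOn.mono hstrip)
      fun q _ => gaussianWeight_pos α K q.1 q.2
  simp only at heq hx ht
  have hm : m < 0 := by
    have := (hle (x₁, t₁) ⟨hx₁, ht₁⟩).trans_lt hneg
    exact neg_of_mul_neg_left this (gaussianWeight_pos α K x₁ t₁).le
  have hvneg : v x t < 0 := heq ▸ mul_neg_of_neg_of_pos hm (gaussianWeight_pos α K x t)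
  have ht₀ : 0 < t := ht.1.lt_of_ne (by rintro rfl; exact (hinitial x hx).not_gt hvneg)
  have hmin : IsMinOn (fun q : ℝ × ℝ => v q.1 q.2 - m * gaussianWeight α K q.1 q.2)
      (Icc (-l) l ×ˢ Icc 0 T) (x, t) := fun r hr => by simpa [heq] using hle r hr
  have he := hv.sub (hφ.const_mul m)
  refine ⟨x, hx, t, ⟨ht₀, ht.2⟩, hvneg, ?_, fun y hy => ?_, fun hx' => ?_⟩
  · have := he.t_nonpos_of_isMinOn hmin hx ⟨ht₀, ht.2⟩
    linear_combination this - K * heq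
  · have := he.x_mul_sub_nonneg_of_isMinOn hmin hx ht hy
    linear_combination this + 2 * α * x * (y - x) * heq
  · have := he.xx_nonneg_of_isMinOn hmin hx' ht
    linear_combination this + (2 * α + (2 * α * x) ^ 2) * heq

theorem nonneg_of_linear_supersolution {A C L T : ℝ} (hl : 0 < l)
    (hv : HasParabolicDerivs l v vx vxx vt) (hinitial : ∀ x ∈ Icc (-l) l, 0 ≤ v x 0)
    (hinterior : ∀ x ∈ Ioo (-l) l, ∀ t ∈ Ioc 0 T, v x t < 0 →
      ∃ a ∈ Icc 0 A, a * vxx x t + C * v x t ≤ vt x t)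
    (hright : ∀ t ∈ Ioc 0 T, v l t < 0 → L * v l t ≤ vx l t)
    (hleft : ∀ t ∈ Ioc 0 T, v (-l) t < 0 → vx (-l) t ≤ -(L * v (-l) t)) :
    ∀ x ∈ Icc (-l) l, ∀ t ∈ Icc 0 T, 0 ≤ v x t := by
  by_contra! hneg
  -- `α` rules out a contact point on the lateral boundary, and then `K` one in the interior
  set α : ℝ := (|L| + 1) / (2 * l) with hα
  set K : ℝ := A * (2 * α + (2 * α * l) ^ 2) + C + 1 with hK
  have hαl : 2 * α * l = |L| + 1 := by rw [hα]; field_simp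
  obtain ⟨x, hx, t, ht, hvneg, hvt, hvx, hvxx⟩ :=
    hv.exists_contact_gaussianWeight α K hinitial hneg
  have hL : (|L| + 1) * v x t < L * v x t :=
    mul_lt_mul_of_neg_right (by linarith [le_abs_self L]) hvneg
  rcases hx.2.eq_or_lt with rfl | hxl
  · have hbarrier : vx x t ≤ (|L| + 1) * v x t := by
      rw [← hαl]
      nlinarith [hvx (-x) ⟨le_rfl, by linarith⟩]
    linarith [hright t ht hvneg]
  rcases hx.1.eq_or_lt with rfl | hxl'
  · have hbarrier : -((|L| + 1) * v (-l) t) ≤ vx (-l) t := by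
      rw [← hαl]
      nlinarith [hvx l ⟨by linarith, le_rfl⟩]
    linarith [hleft t ht hvneg]
  obtain ⟨a, ⟨ha₀, haA⟩, ha⟩ := hinterior x ⟨hxl', hxl⟩ t ht hvneg
  have hα₀ : 0 ≤ α := by positivity
  have hA₀ : 0 ≤ A := ha₀.trans haA
  have hxsq : (2 * α * x) ^ 2 ≤ (2 * α * l) ^ 2 :=
    sq_le_sq' (by nlinarith) (by nlinarith)
  have hdiffusion : A * (2 * α + (2 * α * l) ^ 2) * v x t ≤ a * vxx x t :=
    calc A * (2 * α + (2 * α * l) ^ 2) * v x t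
        ≤ a * (2 * α + (2 * α * x) ^ 2) * v x t :=
          mul_le_mul_of_nonpos_right (mul_le_mul haA (by linarith) (by positivity) hA₀) hvneg.le
      _ ≤ a * vxx x t := by
          rw [mul_assoc]
          exact mul_le_mul_of_nonneg_left (hvxx ⟨hxl', hxl⟩) ha₀
  linarith [show K * v x t = A * (2 * α + (2 * α * l) ^ 2) * v x t + C * v x t + v x t by
    rw [hK]; ring]

end HasParabolicDerivs

/-! ### Comparison of sub- and supersolutions -/

/-- `v` is a subsolution of `∂ₜv = e⁻ᵛ ∂ₓₓv`, which is the logarithmic diffusion equation for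
`v = log u`, with the outward flux `F (v)` on the lateral boundary. -/
structure IsLogSubsolution (l : ℝ) (F : ℝ → ℝ) (v vx vxx vt : ℝ → ℝ → ℝ) : Prop
    extends HasParabolicDerivs l v vx vxx vt where
  exp_mul_t_le : ∀ x ∈ Ioo (-l) l, ∀ t ∈ Ioi (0 : ℝ), exp (v x t) * vt x t ≤ vxx x t
  right_le : ∀ t ∈ Ioi (0 : ℝ), vx l t ≤ F (v l t)
  le_left : ∀ t ∈ Ioi (0 : ℝ), -F (v (-l) t) ≤ vx (-l) t

/-- `v` is a supersolution of the problem of `IsLogSubsolution`. -/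
structure IsLogSupersolution (l : ℝ) (F : ℝ → ℝ) (v vx vxx vt : ℝ → ℝ → ℝ) : Prop
    extends HasParabolicDerivs l v vx vxx vt where
  le_exp_mul_t : ∀ x ∈ Ioo (-l) l, ∀ t ∈ Ioi (0 : ℝ), vxx x t ≤ exp (v x t) * vt x t
  le_right : ∀ t ∈ Ioi (0 : ℝ), F (v l t) ≤ vx l t
  left_le : ∀ t ∈ Ioi (0 : ℝ), vx (-l) t ≤ -F (v (-l) t)

theorem linearized_logDiffusion_le {v w vxx wxx vt wt β M : ℝ} (hv : exp v * vt ≤ vxx)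
    (hw : wxx ≤ exp w * wt) (hβ₀ : 0 ≤ β) (hβ : -β ≤ vxx) (hM : -M ≤ w) (hwv : w ≤ v) :
    exp (-w) * (wxx - vxx) + exp M * β * (w - v) ≤ wt - vt := by
  have hvt : vt ≤ exp (-v) * vxx := by
    rw [exp_neg, inv_mul_eq_div, le_div_iff₀' (exp_pos v)]
    exact hv
  have hwt : exp (-w) * wxx ≤ wt := by
    rw [exp_neg, inv_mul_eq_div, div_le_iff₀' (exp_pos w)]
    exact hw
  have hcoeff₀ : exp (-v) ≤ exp (-w) := exp_le_exp.2 (neg_le_neg hwv)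
  have hcoeff : exp (-w) - exp (-v) ≤ exp M * (v - w) :=
    calc exp (-w) - exp (-v) = exp (-w) * (1 - exp (w - v)) := by
          rw [mul_sub, ← exp_add]; ring_nf
      _ ≤ exp (-w) * (v - w) :=
          mul_le_mul_of_nonneg_left (by linarith [add_one_le_exp (w - v)]) (exp_pos _).le
      _ ≤ exp M * (v - w) :=
          mul_le_mul_of_nonneg_right (exp_le_exp.2 (neg_le.1 hM)) (sub_nonneg.2 hwv)
  have hzeroth : exp M * β * (w - v) ≤ (exp (-w) - exp (-v)) * vxx := by
    nlinarith
  linarith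

theorem exists_sub_le_mul_sub {F : ℝ → ℝ} (hF : LocallyLipschitz F) (M : ℝ) :
    ∃ L, ∀ a ∈ Icc (-M) M, ∀ b ∈ Icc (-M) M, a ≤ b → F b - F a ≤ L * (b - a) := by
  obtain ⟨L, hL⟩ := (hF.locallyLipschitzOn (s := Icc (-M) M)).exists_lipschitzOnWith_of_compact
    isCompact_Icc
  refine ⟨L, fun a ha b hb hab => ?_⟩
  have h := hL.dist_le_mul b hb a ha
  rw [dist_eq, dist_eq, abs_of_nonneg (sub_nonneg.2 hab)] at h
  exact (le_abs_self _).trans h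

theorem HasParabolicDerivs.exists_mem_Icc {l : ℝ} {v vx vxx vt : ℝ → ℝ → ℝ}
    (hv : HasParabolicDerivs l v vx vxx vt) (T : ℝ) :
    ∃ M, ∀ x ∈ Icc (-l) l, ∀ t ∈ Icc 0 T, v x t ∈ Icc (-M) M := by
  obtain ⟨M, hM⟩ := (isCompact_Icc.prod isCompact_Icc).exists_bound_of_continuousOn
    (hv.continuousOn.mono (prod_mono_right (Icc_subset_Ici_self : Icc 0 T ⊆ Ici 0)))
  exact ⟨M, fun x hx t ht => abs_le.1 (hM (x, t) ⟨hx, ht⟩)⟩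

theorem IsLogSubsolution.le_of_initial_le {l : ℝ} {F : ℝ → ℝ}
    {v vx vxx vt w wx wxx wt : ℝ → ℝ → ℝ} (hl : 0 < l) (hF : LocallyLipschitz F)
    (hv : IsLogSubsolution l F v vx vxx vt) (hw : IsLogSupersolution l F w wx wxx wt)
    (hbdd : ∀ T, BddBelow (image2 vxx (Icc (-l) l) (Icc 0 T)))
    (hinitial : ∀ x ∈ Icc (-l) l, v x 0 ≤ w x 0) :
    ∀ x ∈ Icc (-l) l, ∀ t ∈ Ici (0 : ℝ), v x t ≤ w x t := by
  intro x hx T hT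
  obtain ⟨Mv, hMv⟩ := hv.exists_mem_Icc T
  obtain ⟨Mw, hMw⟩ := hw.exists_mem_Icc T
  obtain ⟨b, hb⟩ := hbdd T
  obtain ⟨L, hL⟩ := exists_sub_le_mul_sub hF (max Mv Mw)
  have hflux : ∀ x ∈ Icc (-l) l, ∀ t ∈ Ioc 0 T, w x t - v x t < 0 →
      F (v x t) - F (w x t) ≤ L * (v x t - w x t) := fun x hx t ht hneg =>
    have ht' := Ioc_subset_Icc_self ht
    hL _ (Icc_subset_Icc (neg_le_neg (le_max_right _ _)) (le_max_right _ _) (hMw x hx t ht')) _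
      (Icc_subset_Icc (neg_le_neg (le_max_left _ _)) (le_max_left _ _) (hMv x hx t ht'))
      (sub_neg.1 hneg).le
  have hdiff := hw.toHasParabolicDerivs.sub hv.toHasParabolicDerivs
  refine sub_nonneg.1 (hdiff.nonneg_of_linear_supersolution (A := exp Mw) (C := exp Mw * |b|)
    (L := L) hl (fun y hy => sub_nonneg.2 (hinitial y hy)) ?_ ?_ ?_ x hx T ⟨hT, le_rfl⟩)
  · intro y hy t ht hneg
    have hy' := Ioo_subset_Icc_self hy
    have hM := (hMw y hy' t (Ioc_subset_Icc_self ht)).1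
    have hvxx : b ≤ vxx y t := hb (mem_image2_of_mem hy' (Ioc_subset_Icc_self ht))
    exact ⟨exp (-w y t), ⟨(exp_pos _).le, exp_le_exp.2 (neg_le.1 hM)⟩,
      linearized_logDiffusion_le (hv.exp_mul_t_le y hy t ht.1) (hw.le_exp_mul_t y hy t ht.1)
        (abs_nonneg b) ((neg_abs_le b).trans hvxx) hM (sub_neg.1 hneg).le⟩
  · intro t ht hneg
    have := hflux l ⟨by linarith, le_rfl⟩ t ht hneg
    linarith [hv.right_le t ht.1, hw.le_right t ht.1]
  · intro t ht hneg
    have := hflux (-l) ⟨le_rfl, by linarith⟩ t ht hneg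
    linarith [hv.le_left t ht.1, hw.left_le t ht.1]

/-! ### Partial derivatives on products of sets -/

section PartialDerivatives

variable {E : Type*} [NormedAddCommGroup E] [NormedSpace ℝ E] {F : ℝ × ℝ → E} {I J : Set ℝ}
  {x t : ℝ}

theorem hasDerivWithinAt_prodMk_left (hF : DifferentiableWithinAt ℝ F (I ×ˢ J) (x, t))
    (ht : t ∈ J) :
    HasDerivWithinAt (fun y => F (y, t)) (fderivWithin ℝ F (I ×ˢ J) (x, t) (1, 0)) I x :=
  have hline : MapsTo (fun y => (y, t)) I (I ×ˢ J) := fun _ hy => ⟨hy, ht⟩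
  hF.hasFDerivWithinAt.comp_hasDerivWithinAt x
    ((hasDerivAt_id x).prodMk (hasDerivAt_const x t)).hasDerivWithinAt hline

theorem hasDerivWithinAt_prodMk_right (hF : DifferentiableWithinAt ℝ F (I ×ˢ J) (x, t))
    (hx : x ∈ I) :
    HasDerivWithinAt (fun τ => F (x, τ)) (fderivWithin ℝ F (I ×ˢ J) (x, t) (0, 1)) J t :=
  have hline : MapsTo (fun τ => (x, τ)) J (I ×ˢ J) := fun _ hτ => ⟨hx, hτ⟩
  hF.hasFDerivWithinAt.comp_hasDerivWithinAt t
    ((hasDerivAt_const t x).prodMk (hasDerivAt_id t)).hasDerivWithinAt hline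

theorem contDiffOn_derivWithin_prodMk_left {m n : WithTop ℕ∞} (hI : UniqueDiffOn ℝ I)
    (hJ : UniqueDiffOn ℝ J) (hF : ContDiffOn ℝ n F (I ×ˢ J)) (hmn : m + 1 ≤ n) :
    ContDiffOn ℝ m (fun q => derivWithin (fun y => F (y, q.2)) I q.1) (I ×ˢ J) :=
  ((hF.fderivWithin (hI.prod hJ) hmn).clm_apply contDiffOn_const).congr fun q hq =>
    (hasDerivWithinAt_prodMk_left (hF.differentiableOn (by rintro rfl; simp at hmn) q hq)
      hq.2).derivWithin (hI q.1 hq.1)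

theorem contDiffOn_derivWithin_prodMk_right {m n : WithTop ℕ∞} (hI : UniqueDiffOn ℝ I)
    (hJ : UniqueDiffOn ℝ J) (hF : ContDiffOn ℝ n F (I ×ˢ J)) (hmn : m + 1 ≤ n) :
    ContDiffOn ℝ m (fun q => derivWithin (fun τ => F (q.1, τ)) J q.2) (I ×ˢ J) :=
  ((hF.fderivWithin (hI.prod hJ) hmn).clm_apply contDiffOn_const).congr fun q hq =>
    (hasDerivWithinAt_prodMk_right (hF.differentiableOn (by rintro rfl; simp at hmn) q hq)
      hq.1).derivWithin (hJ q.2 hq.2)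

end PartialDerivatives

/-! ### The logarithm of a solution -/

/-- `∂ₓ log u`, one-sided at `x = ±l`. -/
noncomputable def logFlux (l : ℝ) (u : ℝ → ℝ → ℝ) (x t : ℝ) : ℝ :=
  derivWithin (fun y => log (u y t)) (Icc (-l) l) x

/-- `∂ₜu`, one-sided at `t = 0`. For a solution it is also `∂ₓₓ log u` up to the boundary. -/
noncomputable def timeDeriv (u : ℝ → ℝ → ℝ) (x t : ℝ) : ℝ :=
  derivWithin (u x) (Ici 0) t

/-- The outward flux of `v = log u` prescribed by the Robin condition: `∂ₓu = 2γ u ^ p` reads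
`∂ₓv = 2γ exp ((p - 1) v)`. -/
noncomputable def robinFlux (γ p v : ℝ) : ℝ :=
  2 * γ * exp ((p - 1) * v)

theorem robinFlux_log {γ p a : ℝ} (ha : 0 < a) : robinFlux γ p (log a) = 2 * γ * a ^ (p - 1) := by
  rw [robinFlux, rpow_def_of_pos ha, mul_comm (log a)]

theorem locallyLipschitz_robinFlux (γ p : ℝ) : LocallyLipschitz (robinFlux γ p) := by
  have h : ContDiff ℝ 1 (robinFlux γ p) := by unfold robinFlux; fun_prop
  exact h.locallyLipschitz

namespace IsLogDiffSolGlobal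

variable {l γ p x t : ℝ} {u₀ : ℝ → ℝ} {u : ℝ → ℝ → ℝ}

theorem pos (hu : IsLogDiffSolGlobal l γ p u₀ u) (hx : x ∈ Icc (-l) l) (ht : t ∈ Ici 0) :
    0 < u x t :=
  hu.2.1 x hx t ht

theorem contDiffOn_log (hu : IsLogDiffSolGlobal l γ p u₀ u) :
    ContDiffOn ℝ 2 (fun q : ℝ × ℝ => log (u q.1 q.2)) (Icc (-l) l ×ˢ Ici 0) :=
  hu.1.log fun _ hq => (hu.pos hq.1 hq.2).ne'

theorem contDiffOn_logFlux (hl : 0 < l) (hu : IsLogDiffSolGlobal l γ p u₀ u) :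
    ContDiffOn ℝ 1 (fun q : ℝ × ℝ => logFlux l u q.1 q.2) (Icc (-l) l ×ˢ Ici 0) :=
  contDiffOn_derivWithin_prodMk_left (uniqueDiffOn_Icc (by linarith)) (uniqueDiffOn_Ici 0)
    hu.contDiffOn_log (by norm_num)

theorem continuousOn_timeDeriv (hl : 0 < l) (hu : IsLogDiffSolGlobal l γ p u₀ u) :
    ContinuousOn (fun q : ℝ × ℝ => timeDeriv u q.1 q.2) (Icc (-l) l ×ˢ Ici 0) :=
  (contDiffOn_derivWithin_prodMk_right (m := 0) (uniqueDiffOn_Icc (by linarith))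
    (uniqueDiffOn_Ici 0) hu.1 (by norm_num)).continuousOn

theorem hasDerivWithinAt_time (hu : IsLogDiffSolGlobal l γ p u₀ u) (hx : x ∈ Icc (-l) l)
    (ht : t ∈ Ici 0) : HasDerivWithinAt (u x) (timeDeriv u x t) (Ici 0) t :=
  (hasDerivWithinAt_prodMk_right (hu.1.differentiableOn two_ne_zero (x, t) ⟨hx, ht⟩)
    hx).differentiableWithinAt.hasDerivWithinAt

theorem continuousOn_time (hu : IsLogDiffSolGlobal l γ p u₀ u) (hx : x ∈ Icc (-l) l) :
    ContinuousOn (u x) (Ici 0) :=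
  fun _ ht => (hu.hasDerivWithinAt_time hx ht).continuousWithinAt

theorem hasDerivWithinAt_log (hu : IsLogDiffSolGlobal l γ p u₀ u) (hx : x ∈ Icc (-l) l)
    (ht : t ∈ Ici 0) :
    HasDerivWithinAt (fun y => log (u y t)) (logFlux l u x t) (Icc (-l) l) x :=
  (hasDerivWithinAt_prodMk_left (hu.contDiffOn_log.differentiableOn two_ne_zero (x, t) ⟨hx, ht⟩)
    ht).differentiableWithinAt.hasDerivWithinAt

theorem derivWithin_logFlux_of_mem_interior (hu : IsLogDiffSolGlobal l γ p u₀ u)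
    (hx : x ∈ Ioo (-l) l) (ht : t ∈ Ioi 0) :
    derivWithin (fun y => logFlux l u y t) (Icc (-l) l) x = timeDeriv u x t := by
  have hflux : deriv (fun y => log (u y t)) =ᶠ[𝓝 x] fun y => logFlux l u y t := by
    filter_upwards [Ioo_mem_nhds hx.1 hx.2] with y hy
    exact (derivWithin_of_mem_nhds (Icc_mem_nhds hy.1 hy.2)).symm
  rw [derivWithin_of_mem_nhds (Icc_mem_nhds hx.1 hx.2), ← hflux.deriv_eq,
    ← hu.2.2.1 x (Ioo_subset_Icc_self hx) t ht, timeDeriv,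
    derivWithin_of_mem_nhds (Ici_mem_nhds ht)]

/-- The differential equation, extended up to the parabolic boundary by continuity. -/
theorem hasDerivWithinAt_logFlux (hl : 0 < l) (hu : IsLogDiffSolGlobal l γ p u₀ u)
    (hx : x ∈ Icc (-l) l) (ht : t ∈ Ici 0) :
    HasDerivWithinAt (fun y => logFlux l u y t) (timeDeriv u x t) (Icc (-l) l) x := by
  have hinterior : EqOn
      (fun q : ℝ × ℝ => derivWithin (fun y => logFlux l u y q.2) (Icc (-l) l) q.1)
      (fun q => timeDeriv u q.1 q.2) (Ioo (-l) l ×ˢ Ioi 0) :=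
    fun q hq => hu.derivWithin_logFlux_of_mem_interior hq.1 hq.2
  have hcontinuous := (contDiffOn_derivWithin_prodMk_left (m := 0)
    (uniqueDiffOn_Icc (by linarith)) (uniqueDiffOn_Ici 0) (hu.contDiffOn_logFlux hl)
    (by norm_num)).continuousOn
  have hclosure : Icc (-l) l ×ˢ Ici (0 : ℝ) ⊆ closure (Ioo (-l) l ×ˢ Ioi 0) := by
    rw [closure_prod_eq, closure_Ioo (by linarith), closure_Ioi]
  have heq := hinterior.of_subset_closure hcontinuous (hu.continuousOn_timeDeriv hl)
    (prod_mono Ioo_subset_Icc_self Ioi_subset_Ici_self) hclosure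
  rw [← show _ = timeDeriv u x t from heq (x := (x, t)) ⟨hx, ht⟩]
  exact (hasDerivWithinAt_prodMk_left ((hu.contDiffOn_logFlux hl).differentiableOn one_ne_zero
    (x, t) ⟨hx, ht⟩) ht).differentiableWithinAt.hasDerivWithinAt

/-- The two-sided derivative `deriv` sees values of `u` outside the strip, but a nonzero `deriv` is
a genuine derivative and therefore agrees with the one-sided one. -/
theorem logFlux_eq_of_deriv_eq {c : ℝ} (hl : 0 < l) (hu : IsLogDiffSolGlobal l γ p u₀ u)
    (hx : x ∈ Icc (-l) l) (hc : c ≠ 0)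
    (hderiv : ∀ t ∈ Ioi (0 : ℝ), deriv (fun y => u y t) x = c * u x t ^ p) (ht : t ∈ Ici 0) :
    logFlux l u x t = c * u x t ^ (p - 1) := by
  have hflux : ContinuousOn (logFlux l u x) (Ici 0) :=
    (hu.contDiffOn_logFlux hl).continuousOn.comp (f := fun τ => (x, τ)) (by fun_prop)
      fun _ hτ => ⟨hx, hτ⟩
  have hpower : ContinuousOn (fun τ => c * u x τ ^ (p - 1)) (Ici 0) :=
    continuousOn_const.mul ((hu.continuousOn_time hx).rpow_const
      fun τ hτ => Or.inl (hu.pos hx hτ).ne')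
  have hpositive : EqOn (logFlux l u x) (fun τ => c * u x τ ^ (p - 1)) (Ioi 0) := by
    intro τ hτ
    have hpos := hu.pos hx (mem_Ici_of_Ioi hτ)
    have hdiff : DifferentiableAt ℝ (fun y => u y τ) x :=
      differentiableAt_of_deriv_ne_zero (by rw [hderiv τ hτ]; positivity)
    have hunique := uniqueDiffOn_Icc (by linarith : -l < l) x hx
    change logFlux l u x τ = c * u x τ ^ (p - 1)
    rw [logFlux, derivWithin.log hdiff.differentiableWithinAt hpos.ne' hunique,
      hdiff.derivWithin hunique, hderiv τ hτ, mul_div_assoc, rpow_sub_one hpos.ne']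
  exact hpositive.of_subset_closure hflux hpower Ioi_subset_Ici_self (closure_Ioi (0 : ℝ)).ge ht

theorem logFlux_right (hl : 0 < l) (hγ : γ ≠ 0) (hu : IsLogDiffSolGlobal l γ p u₀ u)
    (ht : t ∈ Ici 0) : logFlux l u l t = 2 * γ * u l t ^ (p - 1) :=
  hu.logFlux_eq_of_deriv_eq hl ⟨by linarith, le_rfl⟩ (by positivity) hu.2.2.2.1 ht

theorem logFlux_left (hl : 0 < l) (hγ : γ ≠ 0) (hu : IsLogDiffSolGlobal l γ p u₀ u)
    (ht : t ∈ Ici 0) : logFlux l u (-l) t = -(2 * γ * u (-l) t ^ (p - 1)) := by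
  rw [hu.logFlux_eq_of_deriv_eq hl ⟨le_rfl, by linarith⟩ (c := -(2 * γ))
    (neg_ne_zero.2 (by positivity)) (fun τ hτ => by rw [hu.2.2.2.2.1 τ hτ, neg_mul]) ht, neg_mul]

theorem logFlux_right_eq_robinFlux (hl : 0 < l) (hγ : γ ≠ 0) (hu : IsLogDiffSolGlobal l γ p u₀ u)
    (ht : t ∈ Ici 0) : logFlux l u l t = robinFlux γ p (log (u l t)) := by
  rw [hu.logFlux_right hl hγ ht, robinFlux_log (hu.pos ⟨by linarith, le_rfl⟩ ht)]

theorem logFlux_left_eq_robinFlux (hl : 0 < l) (hγ : γ ≠ 0) (hu : IsLogDiffSolGlobal l γ p u₀ u)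
    (ht : t ∈ Ici 0) : logFlux l u (-l) t = -robinFlux γ p (log (u (-l) t)) := by
  rw [hu.logFlux_left hl hγ ht, robinFlux_log (hu.pos ⟨le_rfl, by linarith⟩ ht)]

theorem hasParabolicDerivs_log (hl : 0 < l) (hu : IsLogDiffSolGlobal l γ p u₀ u) :
    HasParabolicDerivs l (fun x t => log (u x t)) (logFlux l u) (timeDeriv u)
      (fun x t => timeDeriv u x t / u x t) where
  continuousOn := hu.contDiffOn_log.continuousOn
  hasDerivWithinAt_x _ hx _ ht := hu.hasDerivWithinAt_log hx ht
  hasDerivWithinAt_xx _ hx _ ht := hu.hasDerivWithinAt_logFlux hl hx ht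
  hasDerivWithinAt_t _ hx _ ht := (hu.hasDerivWithinAt_time hx ht).log (hu.pos hx ht).ne'

theorem exp_log_mul_timeDeriv_div (hu : IsLogDiffSolGlobal l γ p u₀ u) (hx : x ∈ Icc (-l) l)
    (ht : t ∈ Ici 0) : exp (log (u x t)) * (timeDeriv u x t / u x t) = timeDeriv u x t := by
  rw [exp_log (hu.pos hx ht), mul_div_cancel₀ _ (hu.pos hx ht).ne']

end IsLogDiffSolGlobal

/-! ### Monotonicity in time and convexity in space -/

theorem IsLogSupersolution.translate {l h : ℝ} {F : ℝ → ℝ} {v vx vxx vt : ℝ → ℝ → ℝ} (hh : 0 ≤ h)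
    (hv : IsLogSupersolution l F v vx vxx vt) :
    IsLogSupersolution l F (fun x t => v x (t + h)) (fun x t => vx x (t + h))
      (fun x t => vxx x (t + h)) (fun x t => vt x (t + h)) where
  toHasParabolicDerivs := hv.toHasParabolicDerivs.translate hh
  le_exp_mul_t x hx t ht := hv.le_exp_mul_t x hx (t + h) (add_pos_of_pos_of_nonneg ht hh)
  le_right t ht := hv.le_right (t + h) (add_pos_of_pos_of_nonneg ht hh)
  left_le t ht := hv.left_le (t + h) (add_pos_of_pos_of_nonneg ht hh)

namespace IsLogDiffSolGlobal

variable {l γ p x t : ℝ} {u₀ : ℝ → ℝ} {u : ℝ → ℝ → ℝ}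

theorem isLogSubsolution_log (hl : 0 < l) (hγ : γ ≠ 0) (hu : IsLogDiffSolGlobal l γ p u₀ u) :
    IsLogSubsolution l (robinFlux γ p) (fun x t => log (u x t)) (logFlux l u) (timeDeriv u)
      (fun x t => timeDeriv u x t / u x t) where
  toHasParabolicDerivs := hu.hasParabolicDerivs_log hl
  exp_mul_t_le _ hx _ ht :=
    (hu.exp_log_mul_timeDeriv_div (Ioo_subset_Icc_self hx) (mem_Ici_of_Ioi ht)).le
  right_le _ ht := (hu.logFlux_right_eq_robinFlux hl hγ (mem_Ici_of_Ioi ht)).le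
  le_left _ ht := (hu.logFlux_left_eq_robinFlux hl hγ (mem_Ici_of_Ioi ht)).ge

theorem isLogSupersolution_log (hl : 0 < l) (hγ : γ ≠ 0) (hu : IsLogDiffSolGlobal l γ p u₀ u) :
    IsLogSupersolution l (robinFlux γ p) (fun x t => log (u x t)) (logFlux l u) (timeDeriv u)
      (fun x t => timeDeriv u x t / u x t) where
  toHasParabolicDerivs := hu.hasParabolicDerivs_log hl
  le_exp_mul_t _ hx _ ht :=
    (hu.exp_log_mul_timeDeriv_div (Ioo_subset_Icc_self hx) (mem_Ici_of_Ioi ht)).ge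
  le_right _ ht := (hu.logFlux_right_eq_robinFlux hl hγ (mem_Ici_of_Ioi ht)).ge
  left_le _ ht := (hu.logFlux_left_eq_robinFlux hl hγ (mem_Ici_of_Ioi ht)).le

theorem timeDeriv_nonneg_of_convexOn_log (hl : 0 < l) (hu : IsLogDiffSolGlobal l γ p u₀ u)
    (hconvex : ConvexOn ℝ (Icc (-l) l) fun y => log (u y t)) (hx : x ∈ Icc (-l) l)
    (ht : t ∈ Ici 0) : 0 ≤ timeDeriv u x t := by
  have hmono : MonotoneOn (fun y => logFlux l u y t) (Icc (-l) l) :=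
    hconvex.monotoneOn_derivWithin fun y hy =>
      (hu.hasDerivWithinAt_log hy ht).differentiableWithinAt
  rw [← (hu.hasDerivWithinAt_logFlux hl hx ht).derivWithin
    (uniqueDiffOn_Icc (by linarith : -l < l) x hx)]
  exact hmono.derivWithin_nonneg

theorem isLogSubsolution_log_initial (hl : 0 < l) (hγ : γ ≠ 0)
    (hu : IsLogDiffSolGlobal l γ p u₀ u)
    (hconvex : ConvexOn ℝ (Icc (-l) l) fun x => log (u x 0)) :
    IsLogSubsolution l (robinFlux γ p) (fun x _ => log (u x 0)) (fun x _ => logFlux l u x 0)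
      (fun x _ => timeDeriv u x 0) (fun _ _ => 0) where
  toHasParabolicDerivs := (hu.hasParabolicDerivs_log hl).initial
  exp_mul_t_le x hx _ _ := by
    simpa using
      hu.timeDeriv_nonneg_of_convexOn_log hl hconvex (Ioo_subset_Icc_self hx) self_mem_Ici
  right_le _ _ := (hu.logFlux_right_eq_robinFlux hl hγ self_mem_Ici).le
  le_left _ _ := (hu.logFlux_left_eq_robinFlux hl hγ self_mem_Ici).ge

theorem bddBelow_timeDeriv (hl : 0 < l) (hu : IsLogDiffSolGlobal l γ p u₀ u) (T : ℝ) :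
    BddBelow (image2 (timeDeriv u) (Icc (-l) l) (Icc 0 T)) := by
  rw [← image_prod]
  exact (isCompact_Icc.prod isCompact_Icc).bddBelow_image
    ((hu.continuousOn_timeDeriv hl).mono (prod_mono_right Icc_subset_Ici_self))

theorem initial_le (hl : 0 < l) (hγ : γ ≠ 0) (hu : IsLogDiffSolGlobal l γ p u₀ u)
    (hconvex : ConvexOn ℝ (Icc (-l) l) fun x => log (u x 0)) (hx : x ∈ Icc (-l) l)
    (ht : t ∈ Ici 0) : u x 0 ≤ u x t := by
  have hbdd : ∀ T : ℝ,
      BddBelow (image2 (fun x _ => timeDeriv u x 0) (Icc (-l) l) (Icc 0 T)) :=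
    fun T => (hu.bddBelow_timeDeriv hl 0).mono <| image2_subset_iff.2 fun y hy _ _ =>
      mem_image2_of_mem hy (left_mem_Icc.2 le_rfl)
  exact (log_le_log_iff (hu.pos hx self_mem_Ici) (hu.pos hx ht)).1 <|
    (hu.isLogSubsolution_log_initial hl hγ hconvex).le_of_initial_le hl
      (locallyLipschitz_robinFlux γ p) (hu.isLogSupersolution_log hl hγ) hbdd
      (fun _ _ => le_rfl) x hx t ht

theorem monotoneOn_time (hl : 0 < l) (hγ : γ ≠ 0) (hu : IsLogDiffSolGlobal l γ p u₀ u)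
    (hconvex : ConvexOn ℝ (Icc (-l) l) fun x => log (u x 0)) (hx : x ∈ Icc (-l) l) :
    MonotoneOn (u x) (Ici 0) := by
  intro s hs t ht hst
  have hle := (hu.isLogSubsolution_log hl hγ).le_of_initial_le hl (locallyLipschitz_robinFlux γ p)
    ((hu.isLogSupersolution_log hl hγ).translate (sub_nonneg.2 hst)) (hu.bddBelow_timeDeriv hl)
    (fun y hy => ?_) x hx s hs
  · rw [add_sub_cancel] at hle
    exact (log_le_log_iff (hu.pos hx hs) (hu.pos hx ht)).1 hle
  · rw [zero_add]
    exact log_le_log (hu.pos hy self_mem_Ici) (hu.initial_le hl hγ hconvex hy (sub_nonneg.2 hst))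

theorem convexOn_log (hl : 0 < l) (hγ : γ ≠ 0) (hu : IsLogDiffSolGlobal l γ p u₀ u)
    (hconvex : ConvexOn ℝ (Icc (-l) l) fun x => log (u x 0)) (ht : t ∈ Ici 0) :
    ConvexOn ℝ (Icc (-l) l) fun x => log (u x t) := by
  refine convexOn_of_hasDerivWithinAt2_nonneg (convex_Icc _ _)
    (fun x hx => (hu.hasDerivWithinAt_log hx ht).continuousWithinAt)
    (fun x hx => (hu.hasDerivWithinAt_log (interior_subset hx) ht).mono interior_subset)
    (fun x hx => (hu.hasDerivWithinAt_logFlux hl (interior_subset hx) ht).mono interior_subset)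
    fun x hx => ?_
  exact (hu.monotoneOn_time hl hγ hconvex (interior_subset hx)).derivWithin_nonneg

end IsLogDiffSolGlobal

/-! ### Extremal values -/

namespace IsLogDiffSolGlobal

variable {l γ p x t : ℝ} {u₀ : ℝ → ℝ} {u : ℝ → ℝ → ℝ}

theorem continuousOn_space (hu : IsLogDiffSolGlobal l γ p u₀ u) (ht : t ∈ Ici 0) :
    ContinuousOn (fun x => u x t) (Icc (-l) l) :=
  hu.1.continuousOn.comp (f := fun x => (x, t)) (by fun_prop) fun _ hx => ⟨hx, ht⟩

theorem isCompact_image (hu : IsLogDiffSolGlobal l γ p u₀ u) (ht : t ∈ Ici 0) :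
    IsCompact ((fun x => u x t) '' Icc (-l) l) :=
  isCompact_Icc.image_of_continuousOn (hu.continuousOn_space ht)

theorem le_uMax (hu : IsLogDiffSolGlobal l γ p u₀ u) (hx : x ∈ Icc (-l) l) (ht : t ∈ Ici 0) :
    u x t ≤ uMax l u t :=
  le_csSup (hu.isCompact_image ht).bddAbove (mem_image_of_mem _ hx)

theorem uMin_le (hu : IsLogDiffSolGlobal l γ p u₀ u) (hx : x ∈ Icc (-l) l) (ht : t ∈ Ici 0) :
    uMin l u t ≤ u x t :=
  csInf_le (hu.isCompact_image ht).bddBelow (mem_image_of_mem _ hx)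

theorem uMin_pos (hl : 0 ≤ l) (hu : IsLogDiffSolGlobal l γ p u₀ u) (ht : t ∈ Ici 0) :
    0 < uMin l u t := by
  obtain ⟨x, hx, heq⟩ :=
    (hu.isCompact_image ht).sInf_mem ((nonempty_Icc.2 (by linarith : -l ≤ l)).image _)
  exact (hu.pos hx ht).trans_eq heq

theorem uMax_pos (hl : 0 ≤ l) (hu : IsLogDiffSolGlobal l γ p u₀ u) (ht : t ∈ Ici 0) :
    0 < uMax l u t :=
  have hmem : l ∈ Icc (-l) l := ⟨by linarith, le_rfl⟩
  (hu.pos hmem ht).trans_le (hu.le_uMax hmem ht)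

theorem uMax_eq_left_or_right (hl : 0 < l) (hγ : γ ≠ 0) (hu : IsLogDiffSolGlobal l γ p u₀ u)
    (hconvex : ConvexOn ℝ (Icc (-l) l) fun x => log (u x 0)) (ht : t ∈ Ici 0) :
    uMax l u t = u (-l) t ∨ uMax l u t = u l t := by
  have hleft : -l ∈ Icc (-l) l := ⟨le_rfl, by linarith⟩
  have hright : l ∈ Icc (-l) l := ⟨by linarith, le_rfl⟩
  obtain ⟨x, hx, heq⟩ := (hu.isCompact_image ht).sSup_mem 
    (Nonempty.image _ ⟨l, hright⟩)
  change u x t = uMax l u t at heq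
  have hmax : log (u x t) ≤ max (log (u (-l) t)) (log (u l t)) :=
    (hu.convexOn_log hl hγ hconvex ht).le_max_of_mem_Icc hleft hright hx
  rcases le_max_iff.1 hmax with h | h
  · exact Or.inl <| (heq.ge.trans <|
      (log_le_log_iff (hu.pos hx ht) (hu.pos hleft ht)).1 h).antisymm
      (hu.le_uMax hleft ht)
  · exact Or.inr <| (heq.ge.trans <|
      (log_le_log_iff (hu.pos hx ht) (hu.pos hright ht)).1 h).antisymm
      (hu.le_uMax hright ht)

theorem uMin_zero_le (hl : 0 < l) (hγ : γ ≠ 0) (hu : IsLogDiffSolGlobal l γ p u₀ u)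
    (hconvex : ConvexOn ℝ (Icc (-l) l) fun x => log (u x 0)) (hx : x ∈ Icc (-l) l)
    (ht : t ∈ Ici 0) : uMin l u 0 ≤ u x t :=
  (hu.uMin_le hx self_mem_Ici).trans (hu.initial_le hl hγ hconvex hx ht)

theorem monotoneOn_uMax (hl : 0 < l) (hγ : γ ≠ 0) (hu : IsLogDiffSolGlobal l γ p u₀ u)
    (hconvex : ConvexOn ℝ (Icc (-l) l) fun x => log (u x 0)) : MonotoneOn (uMax l u) (Ici 0) := by
  intro s hs t ht hst
  refine csSup_le ((nonempty_Icc.2 (by linarith)).image _) (forall_mem_image.2 fun x hx => ?_)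
  exact (hu.monotoneOn_time hl hγ hconvex hx hs ht hst).trans (hu.le_uMax hx ht)

end IsLogDiffSolGlobal

/-! ### Mass balance -/

theorem hasDerivAt_intervalIntegral_of_continuousOn {E : Type*} [NormedAddCommGroup E]
    [NormedSpace ℝ E] {f f' : ℝ → ℝ → E} {a b t : ℝ} {J : Set ℝ} (hJ : J ∈ 𝓝 t)
    (hf : ∀ τ ∈ J, ContinuousOn (fun x => f x τ) (uIcc a b))
    (hf' : ContinuousOn (fun q : ℝ × ℝ => f' q.1 q.2) (uIcc a b ×ˢ J))
    (hderiv : ∀ x ∈ uIcc a b, ∀ τ ∈ J, HasDerivAt (f x) (f' x τ) τ) :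
    HasDerivAt (fun τ => ∫ x in a..b, f x τ) (∫ x in a..b, f' x t) t := by
  obtain ⟨K, hK, hKJ, hKcompact⟩ := local_compact_nhds hJ
  obtain ⟨B, hB⟩ := (isCompact_uIcc.prod hKcompact).exists_bound_of_continuousOn
    (hf'.mono (prod_mono_right hKJ))
  have ht : t ∈ J := mem_of_mem_nhds hJ
  have hf't : ContinuousOn (fun x => f' x t) (uIcc a b) :=
    hf'.comp (f := fun x => (x, t)) (by fun_prop) fun _ hx => ⟨hx, ht⟩
  refine (intervalIntegral.hasDerivAt_integral_of_dominated_loc_of_deriv_le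
    (F := fun τ x => f x τ) (F' := fun τ x => f' x τ) (bound := fun _ => B) hK ?_
    (hf t ht).intervalIntegrable hf't.intervalIntegrable.def'.aestronglyMeasurable ?_
    intervalIntegrable_const ?_).2
  · filter_upwards [hJ] with τ hτ
    exact (hf τ hτ).intervalIntegrable.def'.aestronglyMeasurable
  · exact Eventually.of_forall fun x hx τ hτ => hB (x, τ) ⟨uIoc_subset_uIcc hx, hτ⟩
  · exact Eventually.of_forall fun x hx τ hτ =>
      hderiv x (uIoc_subset_uIcc hx) τ (hKJ hτ)

namespace IsLogDiffSolGlobal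

variable {l γ p a b t : ℝ} {u₀ : ℝ → ℝ} {u : ℝ → ℝ → ℝ}

theorem integral_timeDeriv (hl : 0 < l) (hu : IsLogDiffSolGlobal l γ p u₀ u) (ha : -l ≤ a)
    (hab : a ≤ b) (hb : b ≤ l) (ht : t ∈ Ici 0) :
    ∫ x in a..b, timeDeriv u x t = logFlux l u b t - logFlux l u a t := by
  have hsub : Icc a b ⊆ Icc (-l) l := Icc_subset_Icc ha hb
  have hcontinuous : ContinuousOn (fun x => timeDeriv u x t) (uIcc a b) := by
    rw [uIcc_of_le hab]
    exact (hu.continuousOn_timeDeriv hl).comp (f := fun x => (x, t)) (by fun_prop)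
      fun _ hx => ⟨hsub hx, ht⟩
  refine intervalIntegral.integral_eq_sub_of_hasDerivAt_of_le (f := fun x => logFlux l u x t) hab
    (fun x hx => ((hu.hasDerivWithinAt_logFlux hl (hsub hx) ht).mono hsub).continuousWithinAt)
    (fun x hx => ?_) hcontinuous.intervalIntegrable
  exact (hu.hasDerivWithinAt_logFlux hl (hsub (Ioo_subset_Icc_self hx)) ht).hasDerivAt
    (Icc_mem_nhds (ha.trans_lt hx.1) (hx.2.trans_le hb))

theorem hasDerivAt_integral (hl : 0 < l) (hu : IsLogDiffSolGlobal l γ p u₀ u) (ha : -l ≤ a)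
    (hab : a ≤ b) (hb : b ≤ l) (ht : t ∈ Ioi 0) :
    HasDerivAt (fun τ => ∫ x in a..b, u x τ) (logFlux l u b t - logFlux l u a t) t := by
  have hsub : uIcc a b ⊆ Icc (-l) l := by
    rw [uIcc_of_le hab]
    exact Icc_subset_Icc ha hb
  rw [← hu.integral_timeDeriv hl ha hab hb (mem_Ici_of_Ioi ht)]
  refine hasDerivAt_intervalIntegral_of_continuousOn (Ioi_mem_nhds ht)
    (fun τ hτ => (hu.continuousOn_space (mem_Ici_of_Ioi hτ)).mono hsub)
    ((hu.continuousOn_timeDeriv hl).mono (prod_mono hsub Ioi_subset_Ici_self))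
    fun x hx τ hτ => ?_
  exact (hu.hasDerivWithinAt_time (hsub hx) (mem_Ici_of_Ioi hτ)).hasDerivAt (Ici_mem_nhds hτ)

end IsLogDiffSolGlobal

/-! ### Growth of the maximum -/

theorem mul_le_rpow_of_mul_rpow_le_deriv {M M' : ℝ → ℝ} {k q t : ℝ} (hq : q ≤ 1)
    (hpos : ∀ τ > 0, 0 < M τ) (hderiv : ∀ τ > 0, HasDerivAt M (M' τ) τ)
    (hle : ∀ τ > 0, k * M τ ^ q ≤ M' τ) (ht : 0 < t) : k * (1 - q) * t ≤ M t ^ (1 - q) := by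
  have hderiv' : ∀ τ > 0, HasDerivAt (fun τ => M τ ^ (1 - q) - k * (1 - q) * τ)
      (M' τ * (1 - q) * M τ ^ (1 - q - 1) - k * (1 - q) * 1) τ := fun τ hτ =>
    ((hderiv τ hτ).rpow_const (Or.inl (hpos τ hτ).ne')).sub
      ((hasDerivAt_id τ).const_mul _)
  have hmono : MonotoneOn (fun τ => M τ ^ (1 - q) - k * (1 - q) * τ) (Ioi 0) := by
    refine monotoneOn_of_hasDerivWithinAt_nonneg (convex_Ioi 0)
      (fun τ hτ => (hderiv' τ hτ).continuousAt.continuousWithinAt)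
      (fun τ hτ => (hderiv' τ (interior_subset hτ)).hasDerivWithinAt) fun τ hτ => ?_
    have hτ : 0 < τ := interior_subset hτ
    have hcancel : M τ ^ q * M τ ^ (1 - q - 1) = 1 := by
      rw [← rpow_add (hpos τ hτ), show q + (1 - q - 1) = 0 by ring, rpow_zero]
    calc 0 ≤ (M' τ - k * M τ ^ q) * (1 - q) * M τ ^ (1 - q - 1) :=
          mul_nonneg (mul_nonneg (sub_nonneg.2 (hle τ hτ)) (sub_nonneg.2 hq))
            (rpow_pos_of_pos (hpos τ hτ) _).le
      _ = M' τ * (1 - q) * M τ ^ (1 - q - 1) - k * (1 - q) * 1 := by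
          linear_combination -(k * (1 - q)) * hcancel
  have hlimit : Tendsto (fun s => k * (1 - q) * (t - s)) (𝓝[>] 0)
      (𝓝 (k * (1 - q) * (t - 0))) :=
    ((by fun_prop : Continuous fun s => k * (1 - q) * (t - s)).tendsto 0).mono_left
      nhdsWithin_le_nhds
  rw [sub_zero] at hlimit
  refine le_of_tendsto hlimit ?_
  filter_upwards [Ioc_mem_nhdsGT ht] with s hs
  have hst := hmono hs.1 ht hs.2
  have hnonneg := (rpow_pos_of_pos (hpos s hs.1) (1 - q)).le
  simp only at hst
  linarith

namespace IsLogDiffSolGlobal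

variable {l γ p t : ℝ} {u₀ : ℝ → ℝ} {u : ℝ → ℝ → ℝ}

theorem intervalIntegrable (hu : IsLogDiffSolGlobal l γ p u₀ u) {a b : ℝ} (ha : -l ≤ a)
    (hab : a ≤ b) (hb : b ≤ l) (ht : t ∈ Ici 0) :
    IntervalIntegrable (fun x => u x t) MeasureTheory.volume a b :=
  ((hu.continuousOn_space ht).mono (Icc_subset_Icc ha hb)).intervalIntegrable_of_Icc hab

theorem integral_le_mul_uMax (hl : 0 < l) (hu : IsLogDiffSolGlobal l γ p u₀ u) (ht : t ∈ Ici 0) :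
    ∫ x in (-l)..l, u x t ≤ 2 * l * uMax l u t := by
  calc ∫ x in (-l)..l, u x t ≤ ∫ _ in (-l)..l, uMax l u t :=
        intervalIntegral.integral_mono_on (by linarith)
          (hu.intervalIntegrable le_rfl (by linarith) le_rfl ht) intervalIntegrable_const
          fun x hx => hu.le_uMax hx ht
    _ = 2 * l * uMax l u t := by
        rw [intervalIntegral.integral_const, smul_eq_mul]
        ring

theorem mul_uMax_rpow_le_logFlux_sub (hl : 0 < l) (hγ : 0 < γ)
    (hu : IsLogDiffSolGlobal l γ p u₀ u)
    (hconvex : ConvexOn ℝ (Icc (-l) l) fun x => log (u x 0)) (ht : t ∈ Ici 0) :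
    2 * γ * uMax l u t ^ (p - 1) ≤ logFlux l u l t - logFlux l u (-l) t := by
  have hleft := rpow_pos_of_pos (hu.pos (x := -l) ⟨le_rfl, by linarith⟩ ht) (p - 1)
  have hright := rpow_pos_of_pos (hu.pos (x := l) ⟨by linarith, le_rfl⟩ ht) (p - 1)
  rw [hu.logFlux_right hl hγ.ne' ht, hu.logFlux_left hl hγ.ne' ht]
  rcases hu.uMax_eq_left_or_right hl hγ.ne' hconvex ht with h | h <;> rw [h] <;>
    nlinarith [mul_pos hγ hleft, mul_pos hγ hright]

/-- Bernoulli inequality for the mean `(2l)⁻¹ ∫ u`, which the outward flux `2γ u_max ^ (p - 1)`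
drives and `u_max` dominates. -/
theorem mul_le_uMax_rpow (hl : 0 < l) (hγ : 0 < γ) (hp₁ : 1 ≤ p) (hp₂ : p ≤ 2)
    (hu : IsLogDiffSolGlobal l γ p u₀ u)
    (hconvex : ConvexOn ℝ (Icc (-l) l) fun x => log (u x 0)) (ht : 0 < t) :
    γ / l * (2 - p) * t ≤ uMax l u t ^ (2 - p) := by
  have hpos : ∀ τ > 0, 0 < (∫ x in (-l)..l, u x τ) / (2 * l) := fun τ hτ =>
    div_pos (intervalIntegral.intervalIntegral_pos_of_pos_on
      (hu.intervalIntegrable le_rfl (by linarith) le_rfl hτ.le)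
      (fun x hx => hu.pos (Ioo_subset_Icc_self hx) hτ.le) (by linarith)) (by positivity)
  have hle : ∀ τ > 0, (∫ x in (-l)..l, u x τ) / (2 * l) ≤ uMax l u τ := fun τ hτ =>
    (div_le_iff₀' (by positivity)).2 (hu.integral_le_mul_uMax hl hτ.le)
  have hgrowth : ∀ τ > 0, γ / l * ((∫ x in (-l)..l, u x τ) / (2 * l)) ^ (p - 1) ≤
      (logFlux l u l τ - logFlux l u (-l) τ) / (2 * l) := fun τ hτ =>
    calc γ / l * ((∫ x in (-l)..l, u x τ) / (2 * l)) ^ (p - 1)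
      _ ≤ γ / l * uMax l u τ ^ (p - 1) := mul_le_mul_of_nonneg_left
          (rpow_le_rpow (hpos τ hτ).le (hle τ hτ) (by linarith)) (by positivity)
      _ = 2 * γ * uMax l u τ ^ (p - 1) / (2 * l) := by field_simp
      _ ≤ _ := div_le_div_of_nonneg_right
          (hu.mul_uMax_rpow_le_logFlux_sub hl hγ hconvex hτ.le) (by positivity)
  have hmean := mul_le_rpow_of_mul_rpow_le_deriv (by linarith) hpos
    (fun τ hτ => (hu.hasDerivAt_integral hl le_rfl (by linarith) le_rfl hτ).div_const (2 * l))
    hgrowth ht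
  rw [show 1 - (p - 1) = 2 - p by ring] at hmean
  exact hmean.trans (rpow_le_rpow (hpos t ht).le (hle t ht) (by linarith))

theorem rpow_inv_le_uMax (hl : 0 < l) (hγ : 0 < γ) (hp₁ : 1 ≤ p) (hp₂ : p < 2)
    (hu : IsLogDiffSolGlobal l γ p u₀ u)
    (hconvex : ConvexOn ℝ (Icc (-l) l) fun x => log (u x 0)) (ht : 0 < t) :
    (γ / l * (2 - p) * t) ^ (2 - p)⁻¹ ≤ uMax l u t :=
  have hp : 0 < 2 - p := sub_pos.2 hp₂
  (rpow_inv_le_iff_of_pos (by positivity) (hu.uMax_pos hl.le ht.le).le hp).2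
    (hu.mul_le_uMax_rpow hl hγ hp₁ hp₂.le hconvex ht)

theorem tendsto_uMax_atTop (hl : 0 < l) (hγ : 0 < γ) (hp₁ : 1 ≤ p) (hp₂ : p < 2)
    (hu : IsLogDiffSolGlobal l γ p u₀ u)
    (hconvex : ConvexOn ℝ (Icc (-l) l) fun x => log (u x 0)) :
    Tendsto (uMax l u) atTop atTop := by
  have hp : 0 < 2 - p := sub_pos.2 hp₂
  refine tendsto_atTop_mono' _ ?_ ((tendsto_rpow_atTop (inv_pos.2 hp)).comp
    (tendsto_id.const_mul_atTop (by positivity : 0 < γ / l * (2 - p))))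
  filter_upwards [eventually_gt_atTop 0] with t ht
  exact hu.rpow_inv_le_uMax hl hγ hp₁ hp₂ hconvex ht

end IsLogDiffSolGlobal

/-! ### The inner mass and the profile -/

namespace IsLogDiffSolGlobal

variable {l γ p t : ℝ} {u₀ : ℝ → ℝ} {u : ℝ → ℝ → ℝ}

theorem logFlux_half_sub_le (hl : 0 < l) (hγ : γ ≠ 0) (hu : IsLogDiffSolGlobal l γ p u₀ u)
    (hconvex : ConvexOn ℝ (Icc (-l) l) fun x => log (u x 0)) (ht : t ∈ Ici 0) :
    logFlux l u (l / 2) t - logFlux l u (-(l / 2)) t ≤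
      4 / l * (log (uMax l u t) - log (uMin l u 0)) := by
  have hv := hu.convexOn_log hl hγ hconvex ht
  have hleft : -l ∈ Icc (-l) l := ⟨le_rfl, by linarith⟩
  have hinnerLeft : -(l / 2) ∈ Icc (-l) l := ⟨by linarith, by linarith⟩
  have hinnerRight : l / 2 ∈ Icc (-l) l := ⟨by linarith, by linarith⟩
  have hright : l ∈ Icc (-l) l := ⟨by linarith, le_rfl⟩
  have hupper : ∀ x ∈ Icc (-l) l, log (u x t) ≤ log (uMax l u t) := fun x hx =>
    log_le_log (hu.pos hx ht) (hu.le_uMax hx ht)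
  have hlower : ∀ x ∈ Icc (-l) l, log (uMin l u 0) ≤ log (u x t) := fun x hx =>
    log_le_log (hu.uMin_pos hl.le self_mem_Ici) (hu.uMin_zero_le hl hγ hconvex hx ht)
  have hslopeRight := hv.le_slope_of_hasDerivWithinAt hinnerRight hright (half_lt_self hl)
    (hu.hasDerivWithinAt_log hinnerRight ht)
  have hslopeLeft := hv.slope_le_of_hasDerivWithinAt hleft hinnerLeft (by linarith)
    (hu.hasDerivWithinAt_log hinnerLeft ht)
  rw [slope_def_field] at hslopeRight hslopeLeft
  calc logFlux l u (l / 2) t - logFlux l u (-(l / 2)) t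
    _ ≤ (log (u l t) - log (u (l / 2) t)) / (l - l / 2) -
        (log (u (-(l / 2)) t) - log (u (-l) t)) / (-(l / 2) - -l) :=
      sub_le_sub hslopeRight hslopeLeft
    _ = 2 / l * ((log (u l t) - log (u (l / 2) t)) + (log (u (-l) t) - log (u (-(l / 2)) t))) := by
      rw [sub_half, show -(l / 2) - -l = l / 2 by ring]
      field_simp
      ring
    _ ≤ 2 / l * ((log (uMax l u t) - log (uMin l u 0)) +
        (log (uMax l u t) - log (uMin l u 0))) :=
      mul_le_mul_of_nonneg_left
        (add_le_add (sub_le_sub (hupper l hright) (hlower _ hinnerRight))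
          (sub_le_sub (hupper (-l) hleft) (hlower _ hinnerLeft))) (by positivity)
    _ = 4 / l * (log (uMax l u t) - log (uMin l u 0)) := by ring

theorem integral_half_le (hl : 0 < l) (hγ : γ ≠ 0) (hu : IsLogDiffSolGlobal l γ p u₀ u)
    (hconvex : ConvexOn ℝ (Icc (-l) l) fun x => log (u x 0)) (ht : 1 ≤ t) :
    ∫ x in (-(l / 2))..(l / 2), u x t ≤ (∫ x in (-(l / 2))..(l / 2), u x 1) +
      4 / l * (log (uMax l u t) - log (uMin l u 0)) * (t - 1) := by
  have hderiv : ∀ τ ∈ Icc 1 t, HasDerivAt (fun τ => ∫ x in (-(l / 2))..(l / 2), u x τ)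
      (logFlux l u (l / 2) τ - logFlux l u (-(l / 2)) τ) τ := fun τ hτ =>
    hu.hasDerivAt_integral hl (by linarith) (by linarith) (by linarith)
      (zero_lt_one.trans_le hτ.1)
  have hbound : ∀ τ ∈ interior (Icc 1 t),
      deriv (fun τ => ∫ x in (-(l / 2))..(l / 2), u x τ) τ ≤
        4 / l * (log (uMax l u t) - log (uMin l u 0)) := fun τ hτ => by
    have hτ := interior_subset hτ
    have hτ₀ : τ ∈ Ici 0 := zero_le_one.trans hτ.1
    rw [(hderiv τ hτ).deriv]
    refine (hu.logFlux_half_sub_le hl hγ hconvex hτ₀).trans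
      (mul_le_mul_of_nonneg_left (sub_le_sub_right ?_ _) (by positivity))
    exact log_le_log (hu.uMax_pos hl.le hτ₀)
      (hu.monotoneOn_uMax hl hγ hconvex hτ₀ (hτ₀.out.trans hτ.2) hτ.2)
  have hgrowth := (convex_Icc 1 t).image_sub_le_mul_sub_of_deriv_le
    (fun τ hτ => (hderiv τ hτ).continuousAt.continuousWithinAt)
    (fun τ hτ => (hderiv τ (interior_subset hτ)).differentiableAt.differentiableWithinAt)
    hbound 1 (left_mem_Icc.2 ht) t (right_mem_Icc.2 ht) ht
  linarith

theorem mul_uMin_le_integral_half (hl : 0 < l) (hu : IsLogDiffSolGlobal l γ p u₀ u)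
    (ht : t ∈ Ici 0) : l * uMin l u t ≤ ∫ x in (-(l / 2))..(l / 2), u x t := by
  calc l * uMin l u t = ∫ _ in (-(l / 2))..(l / 2), uMin l u t := by
        rw [intervalIntegral.integral_const, smul_eq_mul]
        ring
    _ ≤ ∫ x in (-(l / 2))..(l / 2), u x t :=
        intervalIntegral.integral_mono_on (by linarith) intervalIntegrable_const
          (hu.intervalIntegrable (by linarith) (by linarith) (by linarith) ht)
          fun x hx => hu.uMin_le (Icc_subset_Icc (by linarith) (by linarith) hx) ht

/-- The inner mass grows at most like `t log u_max`, and `t` is at most of order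
`u_max ^ (2 - p)`. -/
theorem exists_uMin_div_uMax_le (hl : 0 < l) (hγ : 0 < γ) (hp₁ : 1 ≤ p) (hp₂ : p < 2)
    (hu : IsLogDiffSolGlobal l γ p u₀ u)
    (hconvex : ConvexOn ℝ (Icc (-l) l) fun x => log (u x 0)) :
    ∃ A B, ∀ t ≥ 1, uMin l u t / uMax l u t ≤
      A / uMax l u t + B * ((log (uMax l u t) - log (uMin l u 0)) / uMax l u t ^ (p - 1)) := by
  set κ := γ / l * (2 - p)
  have hκ : 0 < κ := mul_pos (div_pos hγ hl) (sub_pos.2 hp₂)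
  refine ⟨(∫ x in (-(l / 2))..(l / 2), u x 1) / l, 4 / (l * l * κ), fun t ht => ?_⟩
  have ht₀ : t ∈ Ici 0 := zero_le_one.trans ht
  have hmax := hu.uMax_pos hl.le ht₀
  have hlog : 0 ≤ log (uMax l u t) - log (uMin l u 0) := sub_nonneg.2 <|
    log_le_log (hu.uMin_pos hl.le self_mem_Ici) <|
      have hright : l ∈ Icc (-l) l := ⟨by linarith, le_rfl⟩
      (hu.uMin_zero_le hl hγ.ne' hconvex hright ht₀).trans (hu.le_uMax hright ht₀)
  have htime : t - 1 ≤ uMax l u t ^ (2 - p) / κ := (sub_le_self t zero_le_one).trans <|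
    (le_div_iff₀' hκ).2 (hu.mul_le_uMax_rpow hl hγ hp₁ hp₂.le hconvex (zero_lt_one.trans_le ht))
  have hpower : uMax l u t ^ (2 - p) / uMax l u t = (uMax l u t ^ (p - 1))⁻¹ := by
    rw [← rpow_sub_one hmax.ne', ← rpow_neg hmax.le]
    ring_nf
  have hinner : l * uMin l u t ≤ (∫ x in (-(l / 2))..(l / 2), u x 1) +
      4 / l * (log (uMax l u t) - log (uMin l u 0)) * (uMax l u t ^ (2 - p) / κ) :=
    ((hu.mul_uMin_le_integral_half hl ht₀).trans (hu.integral_half_le hl hγ.ne' hconvex ht)).trans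
      (add_le_add_right (mul_le_mul_of_nonneg_left htime (by positivity)) _)
  calc uMin l u t / uMax l u t = l * uMin l u t / (l * uMax l u t) := by field_simp
    _ ≤ ((∫ x in (-(l / 2))..(l / 2), u x 1) + 4 / l *
        (log (uMax l u t) - log (uMin l u 0)) * (uMax l u t ^ (2 - p) / κ)) / (l * uMax l u t) :=
      div_le_div_of_nonneg_right hinner (by positivity)
    _ = (∫ x in (-(l / 2))..(l / 2), u x 1) / l / uMax l u t + 4 / (l * l * κ) *
        ((log (uMax l u t) - log (uMin l u 0)) * (uMax l u t ^ (2 - p) / uMax l u t)) := by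
      field_simp
    _ = _ := by rw [hpower, div_eq_mul_inv (log _ - log _)]

end IsLogDiffSolGlobal

theorem tendsto_log_sub_div_rpow_atTop {r : ℝ} (hr : 0 < r) (c : ℝ) :
    Tendsto (fun y => (log y - c) / y ^ r) atTop (𝓝 0) := by
  simpa only [sub_div, sub_zero] using (isLittleO_log_rpow_atTop hr).tendsto_div_nhds_zero.sub
    ((tendsto_rpow_atTop hr).const_div_atTop c)

namespace IsLogDiffSolGlobal

variable {l γ p : ℝ} {u₀ : ℝ → ℝ} {u : ℝ → ℝ → ℝ}

theorem tendsto_uMin_div_uMax (hl : 0 < l) (hγ : 0 < γ) (hp₁ : 1 < p) (hp₂ : p < 2)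
    (hu : IsLogDiffSolGlobal l γ p u₀ u)
    (hconvex : ConvexOn ℝ (Icc (-l) l) fun x => log (u x 0)) :
    Tendsto (fun t => uMin l u t / uMax l u t) atTop (𝓝 0) := by
  obtain ⟨A, B, hbound⟩ := hu.exists_uMin_div_uMax_le hl hγ hp₁.le hp₂ hconvex
  have hmax := hu.tendsto_uMax_atTop hl hγ hp₁.le hp₂ hconvex
  have hlimit := (hmax.const_div_atTop A).add
    (((tendsto_log_sub_div_rpow_atTop (sub_pos.2 hp₁) (log (uMin l u 0))).comp hmax).const_mul B)
  rw [mul_zero, add_zero] at hlimit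
  refine tendsto_of_tendsto_of_tendsto_of_le_of_le' tendsto_const_nhds hlimit ?_ ?_
  · filter_upwards [eventually_ge_atTop 0] with t ht
    exact (div_pos (hu.uMin_pos hl.le ht) (hu.uMax_pos hl.le ht)).le
  · filter_upwards [eventually_ge_atTop 1] with t ht
    exact hbound t ht

end IsLogDiffSolGlobal

theorem uMax_rate_and_nonflat_profile_general {l γ p : ℝ} (hl : 0 < l) (hγ : 0 < γ) (hp₁ : 1 < p)
    (hp₂ : p < 2) {u₀ : ℝ → ℝ} (hconvex : ConvexOn ℝ (Icc (-l) l) fun x => log (u₀ x))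
    {u : ℝ → ℝ → ℝ} (hu : IsLogDiffSolGlobal l γ p u₀ u) :
    (∃ c > 0, ∀ t > 0, c * t ^ (2 - p)⁻¹ ≤ uMax l u t) ∧
      Tendsto (fun t => uMax l u t / uMin l u t) atTop atTop := by
  have hconvex₀ : ConvexOn ℝ (Icc (-l) l) fun x => log (u x 0) :=
    hconvex.congr fun x hx => by rw [hu.2.2.2.2.2 x hx]
  have hκ : 0 < γ / l * (2 - p) := mul_pos (div_pos hγ hl) (sub_pos.2 hp₂)
  refine ⟨⟨(γ / l * (2 - p)) ^ (2 - p)⁻¹, rpow_pos_of_pos hκ _, fun t ht => ?_⟩, ?_⟩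
  · rw [← mul_rpow hκ.le ht.le]
    exact hu.rpow_inv_le_uMax hl hγ hp₁.le hp₂ hconvex₀ ht
  · have hratio : Tendsto (fun t => uMin l u t / uMax l u t) atTop (𝓝[>] 0) := by
      refine tendsto_nhdsWithin_iff.2 ⟨hu.tendsto_uMin_div_uMax hl hγ hp₁ hp₂ hconvex₀, ?_⟩
      filter_upwards [eventually_ge_atTop 0] with t ht
      exact div_pos (hu.uMin_pos hl.le ht) (hu.uMax_pos hl.le ht)
    simpa only [Pi.inv_def, inv_div] using hratio.inv_tendsto_nhdsGT_zero

theorem convexOn_log_of_deriv2_pos {D : Set ℝ} (hD : Convex ℝ D) {f : ℝ → ℝ}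
    (hf : ContinuousOn f D) (hne : ∀ x ∈ D, f x ≠ 0)
    (hderiv : ∀ x ∈ interior D, 0 < deriv (deriv fun y => log (f y)) x) :
    ConvexOn ℝ D fun x => log (f x) :=
  (strictConvexOn_of_deriv2_pos hD (hf.log hne) hderiv).convexOn

theorem uMax_rate_and_nonflat_profile
    (l γ : ℝ) (hl : 0 < l) (hγ : 0 < γ) (u₀ : ℝ → ℝ)
    (hu₀smooth : ContDiffOn ℝ (⊤ : ℕ∞) u₀ (Icc (-l) l))
    (hu₀pos : ∀ x ∈ Icc (-l) l, 0 < u₀ x)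
    (hcompat : CompatCond l γ (3/2) u₀)
    (hconvex : ∀ x ∈ Icc (-l) l, 0 < deriv (deriv (fun y => Real.log (u₀ y))) x)
    (u : ℝ → ℝ → ℝ) (hu : IsLogDiffSolGlobal l γ (3/2) u₀ u) :
    (∃ c > (0:ℝ), ∀ t ≥ (1:ℝ), c * t ^ ((3:ℝ)/2) ≤ uMax l u t) ∧
    Filter.Tendsto (fun t => uMax l u t / uMin l u t) Filter.atTop Filter.atTop := by
  have hlogconvex : ConvexOn ℝ (Icc (-l) l) fun x => log (u₀ x) :=
    convexOn_log_of_deriv2_pos (convex_Icc _ _) hu₀smooth.continuousOn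
      (fun x hx => (hu₀pos x hx).ne') fun x hx => hconvex x (interior_subset hx)
  obtain ⟨⟨c, hc, hgrowth⟩, hprofile⟩ :=
    uMax_rate_and_nonflat_profile_general hl hγ (by norm_num) (by norm_num) hlogconvex hu
  refine ⟨⟨c, hc, fun t ht => ?_⟩, hprofile⟩
  exact (mul_le_mul_of_nonneg_left (rpow_le_rpow_of_exponent_le ht (by norm_num)) hc.le).trans
    (hgrowth t (zero_lt_one.trans_le ht))
end
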